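/- arXiv:2301.00085 — 2 statements merged into one kernel-verified Lean document; each statement's English description precedes it below -/
import Mathlib

section
/- For every integer r ≥ 3 and every ε > 0 there exists d₀ = d₀(r, ε) such that for every fixed integer d ≥ d₀ the following holds. Set m = m(n) := ⌊(d − d^{1/2} log d)·n/r⌋ and D := r·m/n. For every sequence of integers m′ = m′(n) with m − log n ≤ m′ ≤ m, with high probability the uniform random r-uniform hypergraph H_r(n, m′) with exactly m′ hyperedges satisfies both |χ(H_r(n,m′)) − X| ≤ (ε/2)·X and |α(H_r(n,m′)) − Y·n| ≤ (ε/2)·Y·n, where X := ((r−1)d/(r log d))^{1/(r−1)} and Y := (r log D/((r−1)D))^{1/(r−1)}. -/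
open Finset Filter Real

open scoped Classical

/-- All `r`-element subsets of `Fin n`, i.e. the potential hyperedges. -/
noncomputable def edgeCandidates (n r : ℕ) : Finset (Finset (Fin n)) :=
  Finset.univ.filter (fun e : Finset (Fin n) => e.card = r)

/-- The family of all `r`-uniform hypergraphs on `Fin n` with exactly `m` hyperedges. -/
noncomputable def uniformEdgeFamily (n r m : ℕ) : Finset (Finset (Finset (Fin n))) :=
  (edgeCandidates n r).powerset.filter (fun E => E.card = m)

/-- The probability that a uniformly random element of `family` satisfies `P`. -/
noncomputable def uniformProb {α : Type*} (family : Finset α) (P : α → Prop) : ℝ :=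
  ((family.filter (fun x => P x)).card : ℝ) / (family.card : ℝ)

/-- A coloring `c` of the vertices is proper for the hypergraph with edge set `E`
if no edge has all its vertices of the same color. -/
def ProperColoring {n k : ℕ} (E : Finset (Finset (Fin n))) (c : Fin n → Fin k) : Prop :=
  ∀ e ∈ E, ∃ v ∈ e, ∃ w ∈ e, c v ≠ c w

/-- The chromatic number of the hypergraph with edge set `E`. -/
noncomputable def chromaticNumber {n : ℕ} (E : Finset (Finset (Fin n))) : ℕ :=
  sInf {k : ℕ | ∃ c : Fin n → Fin k, ProperColoring E c}

/-- A set of vertices is independent if it contains no edge. -/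
def IndepSet {n : ℕ} (E : Finset (Finset (Fin n))) (S : Finset (Fin n)) : Prop :=
  ∀ e ∈ E, ¬ e ⊆ S

/-- The independence number of the hypergraph with edge set `E`. -/
noncomputable def independenceNumber {n : ℕ} (E : Finset (Finset (Fin n))) : ℕ :=
  sSup {s : ℕ | ∃ S : Finset (Fin n), S.card = s ∧ IndepSet E S}

/-- `m(n) = ⌊(d − √d log d)·n/r⌋`. -/
noncomputable def mFun (r d n : ℕ) : ℕ :=
  ⌊((d : ℝ) - (d : ℝ) ^ ((1 : ℝ) / 2) * Real.log d) * n / r⌋₊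

/-- `D(n) = r·m(n)/n`. -/
noncomputable def DFun (r d n : ℕ) : ℝ :=
  (r : ℝ) * mFun r d n / n

/-!
Write `X = ((r-1)d/(r log d))^{1/(r-1)}`. It suffices to show, for small `η`, that with high
probability `χ ≤ (1 + 2η) X` and `α ≤ (1 + 3η) n / X`: since colour classes are independent sets,
`n ≤ χ α`, which supplies the two matching lower bounds, and `X Y` lies between `1` and `1/(1 - η)`.

*Model.* All estimates are made for a uniform sequence of `m` tuples in `Fin r → Fin n`. A
hypergraph with exactly `m` edges corresponds to at least `m! (r!)^m` such sequences, and for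
`m = O(n)` a constant proportion of all sequences arise in this way, so events of vanishing
probability transfer.

*Independence number.* The union bound over vertex sets of size `⌈(1 + 3η) n / X⌉` suffices.

*Chromatic number.* Put `k = ⌈(1 + η) X⌉`. A second moment computation over nearly balanced
`k`-colourings shows that `k`-colourability has probability at least `n^{-O(1)}`. The pair
correlations are controlled by an entropy estimate for the overlap matrix of two colourings, applied
row by row. The minimal number of monochromatic tuples over all `k`-colourings changes by at most
one when a tuple is changed; as it vanishes with at least inverse polynomial probability, the
bounded differences inequality makes it at most `δ n` with high probability. Finally, with high
probability every vertex set `W` of size at most `δ n` contains fewer than `|W|` tuples, so one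
vertex of each bad tuple can be recoloured greedily with `r` new colours. Hence `χ ≤ k + r`.
-/

open scoped BigOperators

section Probability

variable {α ι : Type*}

lemma uniformProb_eq_card_div (F : Finset α) (P : α → Prop) [DecidablePred P] :
    uniformProb F P = #{x ∈ F | P x} / #F := by
  rw [uniformProb]
  congr!

lemma uniformProb_eq_expect (F : Finset α) (P : α → Prop) [DecidablePred P] :
    uniformProb F P = 𝔼 x ∈ F, if P x then (1 : ℝ) else 0 := by
  rw [expect_eq_sum_div_card, sum_boole, uniformProb_eq_card_div]

lemma uniformProb_nonneg (F : Finset α) (P : α → Prop) : 0 ≤ uniformProb F P := by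
  unfold uniformProb
  positivity

lemma uniformProb_le_one (F : Finset α) (P : α → Prop) : uniformProb F P ≤ 1 :=
  div_le_one_of_le₀ (by gcongr; exact filter_subset _ _) (by positivity)

lemma uniformProb_mono {F : Finset α} {P Q : α → Prop} (h : ∀ x ∈ F, P x → Q x) :
    uniformProb F P ≤ uniformProb F Q := by
  unfold uniformProb
  gcongr
  exact h _ ‹_›

lemma uniformProb_exists_le (F : Finset α) (s : Finset ι) (P : ι → α → Prop) :
    uniformProb F (fun x => ∃ i ∈ s, P i x) ≤ ∑ i ∈ s, uniformProb F (P i) := by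
  simp only [uniformProb_eq_expect, ← expect_sum_comm]
  refine expect_le_expect fun x _ => ?_
  split_ifs with h
  · obtain ⟨i, hi, hPi⟩ := h
    exact (if_pos hPi).ge.trans
      (single_le_sum (f := fun i => if P i x then (1 : ℝ) else 0) (fun _ _ => by positivity) hi)
  · positivity

lemma uniformProb_or_le (F : Finset α) (P Q : α → Prop) :
    uniformProb F (fun x => P x ∨ Q x) ≤ uniformProb F P + uniformProb F Q := by
  simp only [uniformProb_eq_expect, ← expect_add_distrib]
  refine expect_le_expect fun x _ => ?_
  by_cases hP : P x <;> by_cases hQ : Q x <;> simp [hP, hQ]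

lemma uniformProb_not {F : Finset α} (hF : F.Nonempty) (P : α → Prop) :
    uniformProb F (fun x => ¬ P x) = 1 - uniformProb F P := by
  rw [← expect_const hF (1 : ℝ)]
  simp only [uniformProb_eq_expect, ← expect_sub_distrib]
  exact expect_congr rfl fun x _ => by split_ifs <;> norm_num

lemma uniformProb_not_and_not {F : Finset α} (hF : F.Nonempty) (P Q : α → Prop) :
    uniformProb F (fun x => ¬ P x ∧ ¬ Q x) =
      1 - uniformProb F P - uniformProb F Q + uniformProb F (fun x => P x ∧ Q x) := by
  rw [← expect_const hF (1 : ℝ)]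
  simp only [uniformProb_eq_expect, ← expect_sub_distrib, ← expect_add_distrib]
  refine expect_congr rfl fun x _ => ?_
  by_cases hP : P x <;> by_cases hQ : Q x <;> simp [hP, hQ]

lemma expect_pi_prod [Fintype ι] [DecidableEq ι] {T : Type*} [Fintype T] (g : ι → T → ℝ) :
    𝔼 ω : ι → T, ∏ i, g i (ω i) = ∏ i, 𝔼 x, g i x := by
  simp only [Fintype.expect_eq_sum_div_card, prod_div_distrib, prod_univ_sum, prod_const,
    Fintype.card_pi, Fintype.piFinset_univ, Nat.cast_pow]

lemma expect_apply [Fintype ι] [DecidableEq ι] {T : Type*} [Fintype T] [Nonempty T] (g : T → ℝ)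
    (i : ι) : 𝔼 ω : ι → T, g (ω i) = 𝔼 x, g x := by
  have independence := expect_pi_prod fun j x => if j = i then g x else 1
  rw [Fintype.prod_eq_single i fun j hj => by
    simp only [if_neg hj, Fintype.expect_const]] at independence
  simpa only [prod_ite_eq', mem_univ, if_true] using independence

lemma uniformProb_forall [Fintype ι] [DecidableEq ι] {T : Type*} [Fintype T] (P : ι → T → Prop) :
    uniformProb univ (fun ω : ι → T => ∀ i, P i (ω i)) = ∏ i, uniformProb univ (P i) := by
  simp only [uniformProb_eq_expect, ← expect_pi_prod, prod_boole, mem_univ, true_implies]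

lemma uniformProb_le_exp_mul_expect (F : Finset α) (g : α → ℝ) (s : ℝ) :
    uniformProb F (fun x => s ≤ g x) ≤ exp (-s) * 𝔼 x ∈ F, exp (g x) := by
  rw [uniformProb_eq_expect, mul_expect]
  refine expect_le_expect fun x _ => ?_
  split_ifs with h
  · rw [← exp_add]
    exact one_le_exp (by linarith)
  · positivity

/- Apply Cauchy–Schwarz to `Z = ∑ σ ∈ B, 𝟙[A σ] / ℙ[A σ]`, whose expectation is `#B`. -/
lemma card_le_mul_uniformProb_exists (F : Finset α) (B : Finset ι) (A : ι → α → Prop) {M : ℝ}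
    (hA : ∀ σ ∈ B, 0 < uniformProb F (A σ))
    (hM : ∀ σ ∈ B, ∑ τ ∈ B, uniformProb F (fun x => A σ x ∧ A τ x) /
      (uniformProb F (A σ) * uniformProb F (A τ)) ≤ M) :
    #B ≤ M * uniformProb F (fun x => ∃ σ ∈ B, A σ x) := by
  obtain rfl | hB := B.eq_empty_or_nonempty
  · simp [uniformProb]
  let Z : α → ℝ := fun x => ∑ σ ∈ B, (if A σ x then 1 else 0) / uniformProb F (A σ)
  have first_moment : 𝔼 x ∈ F, Z x = #B := by
    simp only [Z, expect_sum_comm, ← expect_div, ← uniformProb_eq_expect]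
    rw [sum_congr rfl fun σ hσ => div_self (hA σ hσ).ne', sum_const, nsmul_one]
  have second_moment : 𝔼 x ∈ F, Z x ^ 2 ≤ #B * M := by
    calc 𝔼 x ∈ F, Z x ^ 2
        = ∑ σ ∈ B, ∑ τ ∈ B, uniformProb F (fun x => A σ x ∧ A τ x) /
            (uniformProb F (A σ) * uniformProb F (A τ)) := by
          simp only [Z, sq, sum_mul_sum, expect_sum_comm, div_mul_div_comm, ← expect_div,
            ite_zero_mul_ite_zero, one_mul, uniformProb_eq_expect F fun _ => _ ∧ _]
      _ ≤ #B * M := by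
          rw [← nsmul_eq_mul]
          exact sum_le_card_nsmul _ _ _ hM
  have support : ∀ x, Z x * (if ∃ σ ∈ B, A σ x then (1 : ℝ) else 0) = Z x := by
    intro x
    split_ifs with h
    · exact mul_one _
    · push Not at h
      rw [mul_zero, eq_comm]
      exact sum_eq_zero fun σ hσ => by rw [if_neg (h σ hσ), zero_div]
  have cauchy_schwarz := expect_mul_sq_le_sq_mul_sq F Z
    fun x => if ∃ σ ∈ B, A σ x then (1 : ℝ) else 0
  simp only [support, first_moment, ite_pow, one_pow, zero_pow two_ne_zero] at cauchy_schwarz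
  rw [← uniformProb_eq_expect] at cauchy_schwarz
  refine le_of_mul_le_mul_left (a := (#B : ℝ)) ?_ (by simpa using hB.card_pos)
  calc (#B : ℝ) * #B = #B ^ 2 := (sq _).symm
    _ ≤ (𝔼 x ∈ F, Z x ^ 2) * uniformProb F (fun x => ∃ σ ∈ B, A σ x) := cauchy_schwarz
    _ ≤ #B * M * uniformProb F (fun x => ∃ σ ∈ B, A σ x) :=
      mul_le_mul_of_nonneg_right second_moment (uniformProb_nonneg _ _)
    _ = #B * (M * uniformProb F (fun x => ∃ σ ∈ B, A σ x)) := mul_assoc _ _ _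

section BoundedDifferences

variable {T : Type*} [Fintype T]

lemma expect_fin_succ {m : ℕ} (f : (Fin (m + 1) → T) → ℝ) :
    𝔼 ω, f ω = 𝔼 ω : Fin m → T, 𝔼 x, f (Fin.cons x ω) := by
  rw [expect_comm, ← expect_product', univ_product_univ]
  exact (Fintype.expect_equiv (Fin.consEquiv fun _ => T) _ _ fun _ => rfl).symm

variable [Nonempty T]

lemma expect_exp_le_of_mem_Icc (f : T → ℝ) {a b : ℝ} (hf : ∀ x, f x ∈ Set.Icc a b) (t : ℝ) :
    𝔼 x, exp (t * f x) ≤ exp (t * 𝔼 x, f x + (b - a) ^ 2 * t ^ 2 / 8) := by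
  let _ : MeasurableSpace T := ⊤
  let μ := (PMF.uniformOfFintype T).toMeasure
  have integral_eq_expect : ∀ g : T → ℝ, ∫ x, g x ∂μ = 𝔼 x, g x := fun g => by
    rw [PMF.integral_eq_sum, Fintype.expect_eq_sum_div_card, sum_div]
    simp [div_eq_inv_mul]
  have hoeffding := (ProbabilityTheory.hasSubgaussianMGF_of_mem_Icc (μ := μ)
    measurable_from_top.aemeasurable (.of_forall hf)).mgf_le t
  simp only [ProbabilityTheory.mgf, integral_eq_expect, NNReal.coe_pow, NNReal.coe_div, coe_nnnorm,
    NNReal.coe_ofNat, norm_eq_abs, div_pow, sq_abs, mul_sub, exp_sub, ← expect_div] at hoeffding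
  rw [div_le_iff₀ (exp_pos _), ← exp_add] at hoeffding
  exact hoeffding.trans_eq (by ring_nf)

/- Integrate out one coordinate at a time, using Hoeffding's lemma. -/
lemma expect_exp_le_of_bounded_differences {m : ℕ} (f : (Fin m → T) → ℝ)
    (hf : ∀ ω i x, f (Function.update ω i x) ≤ f ω + 1) (t : ℝ) :
    𝔼 ω, exp (t * f ω) ≤ exp (t * 𝔼 ω, f ω + m * t ^ 2 / 8) := by
  induction m with
  | zero => simp
  | succ m ih =>
    have first_coordinate : ∀ ω : Fin m → T, 𝔼 x, exp (t * f (Fin.cons x ω)) ≤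
        exp (t * 𝔼 x, f (Fin.cons x ω)) * exp (t ^ 2 / 8) := fun ω => by
      obtain ⟨x₀, hx₀⟩ := Finite.exists_min fun x => f (Fin.cons x ω)
      refine (expect_exp_le_of_mem_Icc (b := f (Fin.cons x₀ ω) + 1) _
        (fun x => ⟨hx₀ x, ?_⟩) t).trans_eq ?_
      · simpa only [Fin.update_cons_zero] using hf (Fin.cons x₀ ω) 0 x
      · rw [← exp_add]
        ring_nf
    have averaged := ih (fun ω => 𝔼 x, f (Fin.cons x ω)) fun ω i y => by
      rw [← Fintype.expect_const (ι := T) (1 : ℝ), ← expect_add_distrib]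
      exact expect_le_expect fun x _ => by
        simpa only [Fin.cons_update] using hf (Fin.cons x ω) i.succ y
    calc 𝔼 ω, exp (t * f ω)
        = 𝔼 ω : Fin m → T, 𝔼 x, exp (t * f (Fin.cons x ω)) := expect_fin_succ _
      _ ≤ (𝔼 ω : Fin m → T, exp (t * 𝔼 x, f (Fin.cons x ω))) * exp (t ^ 2 / 8) := by
        rw [expect_mul]
        exact expect_le_expect fun ω _ => first_coordinate ω
      _ ≤ exp (t * 𝔼 ω, f ω + m * t ^ 2 / 8) * exp (t ^ 2 / 8) := by
        rw [expect_fin_succ f]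
        gcongr
      _ = exp (t * 𝔼 ω, f ω + (m + 1 : ℕ) * t ^ 2 / 8) := by
        rw [← exp_add]
        push_cast
        ring_nf

lemma uniformProb_le_mul_le_exp {m : ℕ} (f : (Fin m → T) → ℝ)
    (hf : ∀ ω i x, f (Function.update ω i x) ≤ f ω + 1) (t s : ℝ) :
    uniformProb univ (fun ω => s ≤ t * f ω) ≤ exp (-s) * exp (t * 𝔼 ω, f ω + m * t ^ 2 / 8) :=
  (uniformProb_le_exp_mul_expect _ _ s).trans
    (mul_le_mul_of_nonneg_left (expect_exp_le_of_bounded_differences f hf t) (exp_pos _).le)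

lemma uniformProb_expect_add_le {m : ℕ} (f : (Fin m → T) → ℝ)
    (hf : ∀ ω i x, f (Function.update ω i x) ≤ f ω + 1) {s : ℝ} (hs : 0 ≤ s) :
    uniformProb univ (fun ω => 𝔼 ω', f ω' + s ≤ f ω) ≤ exp (-(2 * s ^ 2 / m)) := by
  set t : ℝ := 4 * s / m
  refine (uniformProb_mono fun ω _ h => ?_).trans
    ((uniformProb_le_mul_le_exp f hf t (t * (𝔼 ω', f ω' + s))).trans_eq ?_)
  · exact mul_le_mul_of_nonneg_left h (by positivity)
  · rw [← exp_add]
    obtain rfl | hm := eq_or_ne m 0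
    · simp [t]
    · congr 1
      simp only [t]
      field_simp
      ring

lemma uniformProb_le_mul_uniformProb_ge_le {m : ℕ} (f : (Fin m → T) → ℝ)
    (hf : ∀ ω i x, f (Function.update ω i x) ≤ f ω + 1) (a : ℝ) {s : ℝ} (hs : 0 ≤ s) :
    uniformProb univ (fun ω => f ω ≤ a) * uniformProb univ (fun ω => a + s ≤ f ω) ≤
      exp (-(s ^ 2 / m)) := by
  set t : ℝ := 2 * s / m
  have ht : 0 ≤ t := by positivity
  have lower : uniformProb univ (fun ω => f ω ≤ a) ≤
      exp (t * a) * exp (-t * 𝔼 ω, f ω + m * (-t) ^ 2 / 8) := by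
    refine (uniformProb_mono fun ω _ h => ?_).trans
      ((uniformProb_le_mul_le_exp f hf (-t) (-t * a)).trans_eq ?_)
    · exact mul_le_mul_of_nonpos_left h (neg_nonpos.2 ht)
    · rw [neg_mul, neg_neg]
  have upper : uniformProb univ (fun ω => a + s ≤ f ω) ≤
      exp (-(t * (a + s))) * exp (t * 𝔼 ω, f ω + m * t ^ 2 / 8) :=
    (uniformProb_mono fun ω _ h => by gcongr).trans (uniformProb_le_mul_le_exp f hf t (t * (a + s)))
  refine (mul_le_mul lower upper (uniformProb_nonneg _ _) (by positivity)).trans_eq ?_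
  simp only [← exp_add, t]
  obtain rfl | hm := eq_or_ne m 0
  · simp
  · congr 1
    field_simp
    ring

end BoundedDifferences

end Probability

section Entropy

open InformationTheory

lemma pow_sub_tangent_le (s : ℕ) {x : ℝ} (hx : 0 ≤ x) :
    x ^ (s + 2) - (s + 2) * x + (s + 1) ≤ (s + 2) ^ 2 * (x - 1) ^ 2 * (x + 1) ^ s := by
  induction s with
  | zero => norm_num; nlinarith [sq_nonneg (x - 1)]
  | succ s ih =>
    have one_le : 1 ≤ (x + 1) ^ (s + 1) := one_le_pow₀ (by linarith)
    have mul_le : x * (x + 1) ^ s ≤ (x + 1) ^ (s + 1) := by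
      rw [pow_succ']
      gcongr
      linarith
    push_cast
    calc x ^ (s + 1 + 2) - (s + 1 + 2) * x + (s + 1 + 1)
        = x * (x ^ (s + 2) - (s + 2) * x + (s + 1)) + (s + 2) * (x - 1) ^ 2 := by ring
      _ ≤ x * ((s + 2) ^ 2 * (x - 1) ^ 2 * (x + 1) ^ s) + (s + 2) * (x - 1) ^ 2 := by gcongr
      _ = (x - 1) ^ 2 * ((s + 2) ^ 2 * (x * (x + 1) ^ s) + (s + 2) * 1) := by ring
      _ ≤ (x - 1) ^ 2 * ((s + 2) ^ 2 * (x + 1) ^ (s + 1) + (s + 2) * (x + 1) ^ (s + 1)) := by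
        gcongr
      _ = (x - 1) ^ 2 * (((s + 2) ^ 2 + (s + 2)) * (x + 1) ^ (s + 1)) := by ring
      _ ≤ (x - 1) ^ 2 * ((s + 1 + 2) ^ 2 * (x + 1) ^ (s + 1)) := by
        gcongr
        nlinarith [s.cast_nonneg (α := ℝ)]
      _ = (s + 1 + 2) ^ 2 * (x - 1) ^ 2 * (x + 1) ^ (s + 1) := by ring

lemma sq_div_le_klFun {x : ℝ} (hx : 0 ≤ x) : (x - 1) ^ 2 / (2 * (x + 1)) ≤ klFun x := by
  obtain rfl | hx' := hx.eq_or_lt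
  · norm_num [klFun]
  obtain ⟨y, hy, rfl⟩ : ∃ y, 0 < y ∧ y ^ 2 = x := ⟨√x, sqrt_pos.2 hx', sq_sqrt hx⟩
  have log_ge : y ^ 2 * (1 - y⁻¹) ≤ y ^ 2 * log y := by
    gcongr
    exact one_sub_inv_le_log_of_pos hy
  have klFun_ge : (y - 1) ^ 2 ≤ klFun (y ^ 2) := by
    have : y ^ 2 * (1 - y⁻¹) = y ^ 2 - y := by field_simp
    rw [klFun, log_pow]
    push_cast
    linarith
  refine le_trans ?_ klFun_ge
  rw [div_le_iff₀ (by positivity)]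
  nlinarith [sq_nonneg ((y - 1) ^ 2)]

variable {r : ℕ} {K lam x : ℝ}

/- Near `1` both sides are quadratic, and the left side gains from the factor `K ^ (r - 1)`. -/
lemma mul_pow_sub_tangent_le_of_small (hr : 3 ≤ r) (hK : 8 * (r : ℝ) ^ 2 * log K ≤ K)
    (hK1 : 1 ≤ log K) (hlam0 : 0 ≤ lam) (hlam : lam ≤ log K) (hx0 : 0 ≤ x)
    (hx : (x + 1) ^ 2 ≤ 4 * K) :
    lam * (x ^ r - r * x + (r - 1)) ≤ K ^ (r - 1) * klFun x := by
  obtain ⟨s, rfl⟩ : ∃ s, r = s + 3 := ⟨r - 3, by omega⟩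
  set R : ℝ := ((s + 3 : ℕ) : ℝ) ^ 2
  have hR : 1 ≤ R := one_le_pow₀ (by exact_mod_cast Nat.le_add_left 1 (s + 2))
  have hK0 : 4 ≤ K := by nlinarith
  have x_add_one_le : x + 1 ≤ K := abs_le_of_sq_le_sq' (by nlinarith) (by linarith) |>.2
  have scale : (x + 1) ^ (s + 2) * (2 * R * lam) ≤ K ^ (s + 2) :=
    calc (x + 1) ^ (s + 2) * (2 * R * lam)
        = (x + 1) ^ s * ((x + 1) ^ 2 * (2 * R * lam)) := by ring
      _ ≤ K ^ s * (4 * K * (2 * R * log K)) := by gcongr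
      _ = K ^ s * (K * (8 * R * log K)) := by ring
      _ ≤ K ^ s * (K * K) := by gcongr
      _ = K ^ (s + 2) := by ring
  have tangent : x ^ (s + 3) - ((s + 3 : ℕ) : ℝ) * x + (((s + 3 : ℕ) : ℝ) - 1) ≤
      R * (x - 1) ^ 2 * (x + 1) ^ (s + 1) := by
    convert pow_sub_tangent_le (s + 1) hx0 using 2 <;> push_cast [R] <;> ring
  calc lam * (x ^ (s + 3) - ((s + 3 : ℕ) : ℝ) * x + (((s + 3 : ℕ) : ℝ) - 1))
      ≤ lam * (R * (x - 1) ^ 2 * (x + 1) ^ (s + 1)) := by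
        gcongr
    _ = (x + 1) ^ (s + 2) * (2 * R * lam) * ((x - 1) ^ 2 / (2 * (x + 1))) := by
        field_simp
        ring
    _ ≤ K ^ (s + 2) * klFun x := by
        gcongr
        exact sq_div_le_klFun hx0

lemma mul_sq_le_sq_mul_log_sub_one (hlogK : 4 ≤ log K) (hlam : lam ≤ log K - 2) (hx0 : 0 ≤ x)
    (hxK : x ≤ K) (hx : K ≤ x ^ 2) : lam * x ^ 2 ≤ K ^ 2 * (log x - 1) := by
  have hK0 : 0 < K := by
    refine (hx0.trans hxK).lt_of_ne ?_
    rintro rfl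
    norm_num at hlogK
  have hx0' : 0 < x := hx0.lt_of_ne (by rintro rfl; norm_num at hx; linarith)
  rcases le_or_gt (2 * x) K with hxK' | hxK'
  · have log_le : log K ≤ 2 * log x := by
      simpa only [log_pow, Nat.cast_ofNat] using log_le_log hK0 hx
    calc lam * x ^ 2 ≤ log K * (K / 2) ^ 2 := by
          gcongr <;> linarith
      _ = K ^ 2 * (log K / 4) := by ring
      _ ≤ K ^ 2 * (log x - 1) := by
          gcongr
          linarith
  · have log_sub_one_le : log K - 1 ≤ log x := by
      have := log_le_log hK0 hxK'.le
      rw [log_mul two_ne_zero hx0'.ne'] at this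
      linarith [log_two_lt_d9]
    calc lam * x ^ 2 ≤ (log K - 2) * K ^ 2 := by
          gcongr
          linarith
      _ = K ^ 2 * (log K - 2) := mul_comm _ _
      _ ≤ K ^ 2 * (log x - 1) := mul_le_mul_of_nonneg_left (by linarith) (sq_nonneg K)

/- The slack of `2` in `lam ≤ log K - 2` is needed near `x = K`. -/
lemma mul_pow_sub_tangent_le_of_large (hr : 3 ≤ r) (hlogK : 4 ≤ log K) (hlam0 : 0 ≤ lam)
    (hlam : lam ≤ log K - 2) (hx1 : 1 ≤ x) (hxK : x ≤ K) (hx : K ≤ x ^ 2) :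
    lam * (x ^ r - r * x + (r - 1)) ≤ K ^ (r - 1) * klFun x := by
  obtain ⟨s, rfl⟩ : ∃ s, r = s + 3 := ⟨r - 3, by omega⟩
  have hK0 : 0 ≤ K := by linarith
  calc lam * (x ^ (s + 3) - ((s + 3 : ℕ) : ℝ) * x + (((s + 3 : ℕ) : ℝ) - 1))
      ≤ lam * x ^ (s + 3) := by
        gcongr
        push_cast
        nlinarith
    _ = x * (x ^ s * (lam * x ^ 2)) := by ring
    _ ≤ x * (K ^ s * (K ^ 2 * (log x - 1))) := by
        refine mul_le_mul_of_nonneg_left (mul_le_mul (by gcongr) ?_ (by positivity)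
          (by positivity)) (by linarith)
        exact mul_sq_le_sq_mul_log_sub_one hlogK hlam (by linarith) hxK hx
    _ = K ^ (s + 2) * (x * log x - x) := by ring
    _ ≤ K ^ (s + 2) * klFun x := by
        gcongr
        rw [klFun]
        linarith

lemma mul_pow_sub_tangent_le (hr : 3 ≤ r) (hlogK : 4 ≤ log K) (hK : 8 * (r : ℝ) ^ 2 * log K ≤ K)
    (hlam0 : 0 ≤ lam) (hlam : lam ≤ log K - 2) (hx0 : 0 ≤ x) (hxK : x ≤ K) :
    lam * (x ^ r - r * x + (r - 1)) ≤ K ^ (r - 1) * klFun x := by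
  rcases le_or_gt ((x + 1) ^ 2) (4 * K) with hx | hx
  · exact mul_pow_sub_tangent_le_of_small hr hK (by linarith) hlam0 (by linarith) hx0 hx
  · have hK1 : 1 ≤ K := by
      have : (3 : ℝ) ≤ r := mod_cast hr
      nlinarith
    have hx1 : 1 ≤ x := by nlinarith
    exact mul_pow_sub_tangent_le_of_large hr hlogK hlam0 hlam hx1 hxK (by nlinarith)

lemma mul_sum_pow_sub_le_sum_mul_log {ι : Type*} [Fintype ι] (hr : 3 ≤ r)
    (hlog : 4 ≤ log (Fintype.card ι))
    (hle : 8 * (r : ℝ) ^ 2 * log (Fintype.card ι) ≤ Fintype.card ι)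
    (hlam0 : 0 ≤ lam) (hlam : lam ≤ log (Fintype.card ι) - 2) {p : ι → ℝ} (hp0 : ∀ j, 0 ≤ p j)
    (hp1 : ∑ j, p j = 1) :
    lam * (∑ j, p j ^ r - 1 / (Fintype.card ι : ℝ) ^ (r - 1)) ≤
      ∑ j, p j * log (Fintype.card ι * p j) := by
  set K : ℝ := (Fintype.card ι : ℝ)
  have hK0 : 0 < K := by
    have : (3 : ℝ) ≤ r := mod_cast hr
    nlinarith
  have p_le_one : ∀ j, p j ≤ 1 := fun j =>
    (single_le_sum (fun i _ => hp0 i) (mem_univ j)).trans_eq hp1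
  have pow_eq : K ^ r = K ^ (r - 1) * K := by
    rw [← pow_succ]
    congr 1
    omega
  have summed := sum_le_sum fun j (_ : j ∈ univ) =>
    mul_pow_sub_tangent_le (x := K * p j) hr hlog hle hlam0 hlam (mul_nonneg hK0.le (hp0 j))
      (mul_le_of_le_one_right hK0.le (p_le_one j))
  refine le_of_mul_le_mul_left (a := K ^ r) ?_ (by positivity)
  calc K ^ r * (lam * (∑ j, p j ^ r - 1 / K ^ (r - 1)))
      = ∑ j, lam * ((K * p j) ^ r - r * (K * p j) + (r - 1)) := by
        simp only [← mul_sum, sum_add_distrib, sum_sub_distrib, mul_pow, hp1, sum_const, card_univ,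
          nsmul_eq_mul, pow_eq]
        field_simp
        ring
    _ ≤ ∑ j, K ^ (r - 1) * klFun (K * p j) := summed
    _ = K ^ r * ∑ j, p j * log (K * p j) := by
        simp only [klFun, ← mul_sum, sum_add_distrib, sum_sub_distrib, hp1, sum_const, card_univ,
          nsmul_eq_mul, pow_eq, mul_assoc]
        ring

end Entropy

section Colorings

variable {V K L : Type*} [Fintype V]

lemma sum_uniformProb_and_eq {α : Type*} [Fintype K] (F : Finset α) (P : α → Prop) (f : α → K) :
    ∑ j, uniformProb F (fun x => P x ∧ f x = j) = uniformProb F P := by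
  simp only [uniformProb_eq_expect, ← expect_sum_comm, ite_and]
  exact expect_congr rfl fun x _ => by split_ifs <;> simp

/-- The proportion of vertices to which the colouring `σ` gives the colour `i`. -/
noncomputable def colorDensity (σ : V → K) (i : K) : ℝ :=
  uniformProb univ fun v => σ v = i

lemma colorDensity_nonneg (σ : V → K) (i : K) : 0 ≤ colorDensity σ i := uniformProb_nonneg _ _

lemma colorDensity_apply_pos (σ : V → K) (v : V) : 0 < colorDensity σ (σ v) :=
  div_pos (by exact_mod_cast card_pos.2 ⟨v, by simp⟩)
    (by exact_mod_cast card_pos.2 ⟨v, mem_univ v⟩)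

lemma sum_colorDensity [Nonempty V] [Fintype K] (σ : V → K) : ∑ i, colorDensity σ i = 1 := by
  have total : uniformProb univ (fun _ : V => True) = 1 := by simp [uniformProb]
  simpa only [colorDensity, true_and, total] using sum_uniformProb_and_eq univ (fun _ => True) σ

lemma sum_colorDensity_prodMk [Fintype L] (σ : V → K) (τ : V → L) (i : K) :
    ∑ j, colorDensity (fun v => (σ v, τ v)) (i, j) = colorDensity σ i := by
  simpa only [colorDensity, Prod.mk.injEq] using sum_uniformProb_and_eq univ (fun v => σ v = i) τ

lemma expect_comp_eq_sum_colorDensity [Fintype K] (σ : V → K) (g : K → ℝ) :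
    𝔼 v, g (σ v) = ∑ i, colorDensity σ i * g i := by
  simp only [colorDensity, uniformProb_eq_expect, expect_mul, ← expect_sum_comm]
  exact expect_congr rfl fun v _ => by simp

/- For a fixed overlap matrix, the factors form a probability distribution on the colours of `v`. -/
lemma sum_prod_colorDensity_le_one [Finite L] (σ : V → K) (τ₀ : V → L) (S : Finset (V → L))
    (hS : ∀ τ ∈ S, colorDensity (fun v => (σ v, τ v)) = colorDensity (fun v => (σ v, τ₀ v))) :
    ∑ τ ∈ S, ∏ v, colorDensity (fun v => (σ v, τ v)) (σ v, τ v) / colorDensity σ (σ v) ≤ 1 := by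
  have := Fintype.ofFinite L
  let density : V → L → ℝ := fun v j =>
    colorDensity (fun v => (σ v, τ₀ v)) (σ v, j) / colorDensity σ (σ v)
  calc ∑ τ ∈ S, ∏ v, colorDensity (fun v => (σ v, τ v)) (σ v, τ v) / colorDensity σ (σ v)
      = ∑ τ ∈ S, ∏ v, density v (τ v) := sum_congr rfl fun τ hτ => by simp only [hS τ hτ, density]
    _ ≤ ∑ τ : V → L, ∏ v, density v (τ v) :=
        sum_le_sum_of_subset_of_nonneg (subset_univ _) fun τ _ _ => prod_nonneg fun v _ =>
          div_nonneg (colorDensity_nonneg _ _) (colorDensity_nonneg _ _)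
    _ = ∏ v, ∑ j, density v j := by rw [prod_univ_sum, Fintype.piFinset_univ]
    _ = 1 := prod_eq_one fun v _ => by
        rw [← sum_div, sum_colorDensity_prodMk, div_self (colorDensity_apply_pos σ v).ne']

lemma exp_card_mul_expect_log (σ : V → K) (τ : V → L) {b : ℝ} (hb : 0 < b) :
    exp (Fintype.card V * 𝔼 v, log (b *
        (colorDensity (fun v => (σ v, τ v)) (σ v, τ v) / colorDensity σ (σ v)))) =
      b ^ Fintype.card V *
        ∏ v, colorDensity (fun v => (σ v, τ v)) (σ v, τ v) / colorDensity σ (σ v) := by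
  rw [Fintype.card_mul_expect, exp_sum, ← card_univ, ← prod_const, ← prod_mul_distrib]
  exact prod_congr rfl fun v _ => exp_log <| mul_pos hb <|
    div_pos (colorDensity_apply_pos (fun v => (σ v, τ v)) v) (colorDensity_apply_pos σ v)

lemma sum_prod_colorDensity_le [Fintype K] [Fintype L] (σ : V → K) :
    ∑ τ : V → L, ∏ v, colorDensity (fun v => (σ v, τ v)) (σ v, τ v) / colorDensity σ (σ v) ≤
      (Fintype.card V + 1 : ℝ) ^ (Fintype.card K * Fintype.card L) := by
  let overlap : (V → L) → K × L → Fin (Fintype.card V + 1) := fun τ p =>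
    ⟨#{v | (σ v, τ v) = p}, Nat.lt_succ_of_le (card_le_univ _)⟩
  have group_le_one : ∀ M, ∑ τ with overlap τ = M,
      ∏ v, colorDensity (fun v => (σ v, τ v)) (σ v, τ v) / colorDensity σ (σ v) ≤ 1 := by
    intro M
    obtain hM | ⟨τ₀, hτ₀⟩ := (univ.filter fun τ => overlap τ = M).eq_empty_or_nonempty
    · rw [hM, sum_empty]
      exact zero_le_one
    · refine sum_prod_colorDensity_le_one σ τ₀ _ fun τ hτ => funext fun p => ?_
      have same_card := congrArg Fin.val
        (congrFun ((mem_filter.1 hτ).2.trans (mem_filter.1 hτ₀).2.symm) p)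
      simp only [colorDensity, uniformProb_eq_card_div]
      exact congrArg (fun c : ℕ => (c : ℝ) / #(univ : Finset V)) same_card
  calc ∑ τ : V → L, ∏ v, colorDensity (fun v => (σ v, τ v)) (σ v, τ v) / colorDensity σ (σ v)
      = ∑ M, ∑ τ with overlap τ = M,
          ∏ v, colorDensity (fun v => (σ v, τ v)) (σ v, τ v) / colorDensity σ (σ v) :=
        (sum_fiberwise univ overlap _).symm
    _ ≤ ∑ _M : K × L → Fin (Fintype.card V + 1), (1 : ℝ) := sum_le_sum fun M _ => group_le_one M
    _ = (Fintype.card V + 1 : ℝ) ^ (Fintype.card K * Fintype.card L) := by simp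

/-- All vertices of the tuple `e` have the same colour under `σ`. -/
def Monochromatic {ι V K : Type*} (σ : V → K) (e : ι → V) : Prop :=
  ∃ j, ∀ a, σ (e a) = j

lemma monochromatic_prodMk {ι V K L : Type*} {σ : V → K} {τ : V → L} {e : ι → V} :
    Monochromatic (fun v => (σ v, τ v)) e ↔ Monochromatic σ e ∧ Monochromatic τ e := by
  simp only [Monochromatic, Prod.exists, Prod.mk.injEq, forall_and, exists_and_left,
    exists_and_right]

/-- The probability that a random `r`-tuple of vertices is monochromatic under `σ`. -/
noncomputable def monoDensity (r : ℕ) (σ : V → K) : ℝ :=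
  uniformProb univ fun e : Fin r → V => Monochromatic σ e

variable {r : ℕ}

lemma monoDensity_eq_sum [Fintype K] (hr : 0 < r) (σ : V → K) :
    monoDensity r σ = ∑ j, colorDensity σ j ^ r := by
  rw [monoDensity, ← sum_uniformProb_and_eq univ _ fun e => σ (e ⟨0, hr⟩)]
  refine sum_congr rfl fun j _ => ?_
  have all_eq : ∀ e : Fin r → V, Monochromatic σ e ∧ σ (e ⟨0, hr⟩) = j ↔ ∀ a, σ (e a) = j :=
    fun e => ⟨fun ⟨⟨i, hi⟩, hj⟩ a => ((hi a).trans (hi _).symm).trans hj,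
      fun h => ⟨⟨j, h⟩, h _⟩⟩
  have product := uniformProb_forall fun (_ : Fin r) v => σ v = j
  simpa only [all_eq, colorDensity, prod_const, card_univ, Fintype.card_fin] using product

lemma mul_pow_sub_pow_le_sum_mul_log [Fintype L] (hr : 3 ≤ r)
    (hlog : 4 ≤ log (Fintype.card L))
    (hle : 8 * (r : ℝ) ^ 2 * log (Fintype.card L) ≤ Fintype.card L) {lam : ℝ} (hlam0 : 0 ≤ lam)
    (σ : V → K) (τ : V → L) (i : K)
    (hlam : lam * colorDensity σ i ^ (r - 1) ≤ log (Fintype.card L) - 2) :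
    lam * (∑ j, colorDensity (fun v => (σ v, τ v)) (i, j) ^ r -
        colorDensity σ i ^ r * (1 / (Fintype.card L : ℝ) ^ (r - 1))) ≤
      ∑ j, colorDensity (fun v => (σ v, τ v)) (i, j) *
        log (Fintype.card L * (colorDensity (fun v => (σ v, τ v)) (i, j) / colorDensity σ i)) := by
  have hd : 0 ≤ colorDensity σ i := colorDensity_nonneg σ i
  have hD0 : ∀ j, 0 ≤ colorDensity (fun v => (σ v, τ v)) (i, j) := fun j => colorDensity_nonneg _ _
  have hDd := sum_colorDensity_prodMk σ τ i
  generalize colorDensity σ i = d at *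
  generalize colorDensity (fun v => (σ v, τ v)) = D at *
  obtain rfl | hd := hd.eq_or_lt
  · have hD : ∀ j, D (i, j) = 0 := fun j =>
      (sum_eq_zero_iff_of_nonneg fun j _ => hD0 j).1 hDd j (mem_univ j)
    have hr0 : r ≠ 0 := by omega
    simp only [hD, zero_pow hr0, zero_mul, sum_const_zero, sub_zero, mul_zero, le_refl]
  have entropy := mul_sum_pow_sub_le_sum_mul_log hr hlog hle
    (mul_nonneg hlam0 (pow_nonneg hd.le _)) hlam (p := fun j => D (i, j) / d)
    (fun j => div_nonneg (hD0 j) hd.le) (by rw [← sum_div, hDd, div_self hd.ne'])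
  calc lam * (∑ j, D (i, j) ^ r - d ^ r * (1 / (Fintype.card L : ℝ) ^ (r - 1)))
      = d * (lam * d ^ (r - 1) *
          (∑ j, (D (i, j) / d) ^ r - 1 / (Fintype.card L : ℝ) ^ (r - 1))) := by
        obtain ⟨s, rfl⟩ : ∃ s, r = s + 1 := ⟨r - 1, by omega⟩
        simp only [div_pow, ← sum_div, Nat.add_sub_cancel]
        field_simp
        ring
    _ ≤ d * ∑ j, D (i, j) / d * log (Fintype.card L * (D (i, j) / d)) := by gcongr
    _ = ∑ j, D (i, j) * log (Fintype.card L * (D (i, j) / d)) := by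
        rw [mul_sum]
        exact sum_congr rfl fun j _ => by field_simp

lemma one_sub_sub_add_pow_le {p q s : ℝ} (hp : p < 1) (hq : q < 1) (hs : 0 ≤ 1 - p - q + s)
    (m : ℕ) :
    (1 - p - q + s) ^ m / ((1 - p) ^ m * (1 - q) ^ m) ≤
      exp (m * (1 / ((1 - p) * (1 - q)) * (s - p * q))) := by
  have hpq : 0 < (1 - p) * (1 - q) := mul_pos (by linarith) (by linarith)
  have ratio_eq : (1 - p - q + s) / ((1 - p) * (1 - q)) =
      1 / ((1 - p) * (1 - q)) * (s - p * q) + 1 := by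
    rw [one_div_mul_eq_div, div_add_one hpq.ne']
    congr 1
    ring
  rw [← mul_pow, ← div_pow, exp_nat_mul]
  gcongr
  rw [ratio_eq]
  exact add_one_le_exp _

variable [Nonempty V]

lemma uniformProb_not_monochromatic (σ : V → K) :
    uniformProb univ (fun e : Fin r → V => ¬ Monochromatic σ e) = 1 - monoDensity r σ :=
  uniformProb_not univ_nonempty _

lemma uniformProb_not_monochromatic_and (σ : V → K) (τ : V → L) :
    uniformProb univ (fun e : Fin r → V => ¬ Monochromatic σ e ∧ ¬ Monochromatic τ e) =
      1 - monoDensity r σ - monoDensity r τ + monoDensity r (fun v => (σ v, τ v)) := by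
  simp only [monoDensity, monochromatic_prodMk]
  exact uniformProb_not_and_not univ_nonempty _ _

lemma monoDensity_le_pow [Finite K] (hr : 0 < r) {σ : V → K} {a : ℝ}
    (ha : ∀ i, colorDensity σ i ≤ a) : monoDensity r σ ≤ a ^ (r - 1) := by
  have := Fintype.ofFinite K
  calc monoDensity r σ = ∑ j, colorDensity σ j ^ (r - 1) * colorDensity σ j := by
        simp only [monoDensity_eq_sum hr, ← pow_succ, Nat.sub_add_cancel hr]
    _ ≤ ∑ j, a ^ (r - 1) * colorDensity σ j := by
        gcongr with j
        · exact colorDensity_nonneg σ j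
        · exact colorDensity_nonneg σ j
        · exact ha j
    _ = a ^ (r - 1) := by rw [← mul_sum, sum_colorDensity, mul_one]

lemma one_div_pow_le_monoDensity [Fintype K] (hr : 0 < r) (σ : V → K) :
    1 / (Fintype.card K : ℝ) ^ (r - 1) ≤ monoDensity r σ := by
  have power_mean := pow_sum_div_card_le_sum_pow (s := univ) (f := colorDensity σ)
    (fun j _ => colorDensity_nonneg σ j) (r - 1)
  rwa [sum_colorDensity, one_pow, card_univ, Nat.sub_add_cancel hr, ← monoDensity_eq_sum hr]
    at power_mean

/-- The conditions on the number `k` of colours, the density `c` of tuples and the largest colour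
density `a` under which the second moment of the number of proper colourings is controlled. -/
structure SecondMomentRange (r k : ℕ) (c a : ℝ) : Prop where
  four_le_log : 4 ≤ log k
  log_le : 8 * (r : ℝ) ^ 2 * log k ≤ k
  pow_lt_one : a ^ (r - 1) < 1
  density_le : c * a ^ (r - 1) / (1 - a ^ (r - 1)) ^ 2 ≤ log k - 2

lemma mul_monoDensity_sub_le_expect_log [Finite K] [Fintype L] (hr : 3 ≤ r)
    (hlog : 4 ≤ log (Fintype.card L))
    (hle : 8 * (r : ℝ) ^ 2 * log (Fintype.card L) ≤ Fintype.card L) {lam : ℝ} (hlam0 : 0 ≤ lam)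
    (σ : V → K) (τ : V → L)
    (hlam : ∀ i, lam * colorDensity σ i ^ (r - 1) ≤ log (Fintype.card L) - 2) :
    lam * (monoDensity r (fun v => (σ v, τ v)) - monoDensity r σ * monoDensity r τ) ≤
      𝔼 v, log (Fintype.card L *
        (colorDensity (fun v => (σ v, τ v)) (σ v, τ v) / colorDensity σ (σ v))) := by
  have := Fintype.ofFinite K
  have hr0 : 0 < r := by omega
  rw [expect_comp_eq_sum_colorDensity (fun v => (σ v, τ v)) fun p => log (Fintype.card L *
    (colorDensity (fun v => (σ v, τ v)) p / colorDensity σ p.1)), Fintype.sum_prod_type]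
  calc lam * (monoDensity r (fun v => (σ v, τ v)) - monoDensity r σ * monoDensity r τ)
      ≤ lam * (monoDensity r (fun v => (σ v, τ v)) -
          monoDensity r σ * (1 / (Fintype.card L : ℝ) ^ (r - 1))) := by
        gcongr
        · exact uniformProb_nonneg _ _
        · exact one_div_pow_le_monoDensity hr0 τ
    _ = ∑ i, lam * (∑ j, colorDensity (fun v => (σ v, τ v)) (i, j) ^ r -
          colorDensity σ i ^ r * (1 / (Fintype.card L : ℝ) ^ (r - 1))) := by
        simp only [monoDensity_eq_sum hr0, Fintype.sum_prod_type, ← mul_sum, sum_sub_distrib,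
          ← sum_mul]
    _ ≤ _ := sum_le_sum fun i _ =>
        mul_pow_sub_pow_le_sum_mul_log hr hlog hle hlam0 σ τ i (hlam i)

lemma SecondMomentRange.mul_pow_le {k : ℕ} {c a c' p q x : ℝ} (h : SecondMomentRange r k c a)
    (hc' : 0 ≤ c') (hc : c' ≤ c) (hp : p ≤ a ^ (r - 1)) (hq : q ≤ a ^ (r - 1)) (hx0 : 0 ≤ x)
    (hx : x ≤ a) : c' * (1 / ((1 - p) * (1 - q))) * x ^ (r - 1) ≤ log k - 2 := by
  have hA : 0 < 1 - a ^ (r - 1) := sub_pos.2 h.pow_lt_one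
  calc c' * (1 / ((1 - p) * (1 - q))) * x ^ (r - 1)
      = c' * x ^ (r - 1) / ((1 - p) * (1 - q)) := by rw [mul_one_div, div_mul_eq_mul_div]
    _ ≤ c * a ^ (r - 1) / (1 - a ^ (r - 1)) ^ 2 := by
        have := hc'.trans hc
        have := hx0.trans hx
        have : 0 ≤ 1 - p := hA.le.trans (by gcongr)
        rw [sq]
        gcongr
    _ ≤ log k - 2 := h.density_le

lemma correlation_le [Fintype K] (hr : 3 ≤ r) {c a : ℝ} {m : ℕ}
    (h : SecondMomentRange r (Fintype.card K) c a) (hm : m ≤ c * Fintype.card V) {σ τ : V → K}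
    (hσ : ∀ i, colorDensity σ i ≤ a) (hτ : ∀ i, colorDensity τ i ≤ a) :
    uniformProb univ (fun e : Fin r → V => ¬ Monochromatic σ e ∧ ¬ Monochromatic τ e) ^ m /
        ((1 - monoDensity r σ) ^ m * (1 - monoDensity r τ) ^ m) ≤
      (Fintype.card K : ℝ) ^ Fintype.card V *
        ∏ v, colorDensity (fun v => (σ v, τ v)) (σ v, τ v) / colorDensity σ (σ v) := by
  have hr0 : 0 < r := by omega
  set n : ℝ := (Fintype.card V : ℝ)
  set p := monoDensity r σ
  set q := monoDensity r τ
  have hn : 0 < n := Nat.cast_pos.2 Fintype.card_pos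
  have hp : p ≤ a ^ (r - 1) := monoDensity_le_pow hr0 hσ
  have hq : q ≤ a ^ (r - 1) := monoDensity_le_pow hr0 hτ
  have hp1 : 0 < 1 - p := sub_pos.2 (hp.trans_lt h.pow_lt_one)
  have hq1 : 0 < 1 - q := sub_pos.2 (hq.trans_lt h.pow_lt_one)
  have exponent_le := mul_monoDensity_sub_le_expect_log hr h.four_le_log h.log_le
    (by positivity) σ τ fun i => h.mul_pow_le (div_nonneg m.cast_nonneg hn.le)
      ((div_le_iff₀ hn).2 hm) hp hq (colorDensity_nonneg σ i) (hσ i)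
  have hk : (0 : ℝ) < Fintype.card K := Nat.cast_pos.2 <|
    Fintype.card_pos_iff.2 (‹Nonempty V›.map σ)
  rw [uniformProb_not_monochromatic_and, ← exp_card_mul_expect_log σ τ hk]
  refine (one_sub_sub_add_pow_le (sub_pos.1 hp1) (sub_pos.1 hq1) ?_ m).trans (exp_le_exp.2 ?_)
  · rw [← uniformProb_not_monochromatic_and]
    exact uniformProb_nonneg _ _
  · refine le_trans (le_of_eq ?_) (mul_le_mul_of_nonneg_left exponent_le hn.le)
    rw [← mul_assoc n, ← mul_assoc n, mul_div_cancel₀ _ hn.ne', mul_assoc]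

end Colorings

section Colorable

variable {V K : Type*} {r : ℕ}

/-- The hypergraph whose edges are the tuples `ω i` is properly colourable with colours in `K`. -/
def TupleColorable {ι : Type*} (K : Type*) (ω : ι → Fin r → V) : Prop :=
  ∃ σ : V → K, ∀ i, ¬ Monochromatic σ (ω i)

lemma uniformProb_forall_not_monochromatic [Fintype V] [Nonempty V] (σ : V → K) (m : ℕ) :
    uniformProb univ (fun ω : Fin m → Fin r → V => ∀ i, ¬ Monochromatic σ (ω i)) =
      (1 - monoDensity r σ) ^ m := by
  rw [uniformProb_forall fun _ e => ¬ Monochromatic σ e, prod_const, card_univ, Fintype.card_fin,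
    uniformProb_not_monochromatic]

lemma uniformProb_forall_not_monochromatic_and [Fintype V] (σ τ : V → K) (m : ℕ) :
    uniformProb univ (fun ω : Fin m → Fin r → V =>
        (∀ i, ¬ Monochromatic σ (ω i)) ∧ ∀ i, ¬ Monochromatic τ (ω i)) =
      uniformProb univ (fun e : Fin r → V => ¬ Monochromatic σ e ∧ ¬ Monochromatic τ e) ^ m := by
  simp only [← forall_and]
  rw [uniformProb_forall fun _ e => ¬ Monochromatic σ e ∧ ¬ Monochromatic τ e, prod_const,
    card_univ, Fintype.card_fin]

lemma sum_correlation_le [Fintype V] [Nonempty V] [Fintype K] (hr : 3 ≤ r)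
    {c a : ℝ} {m : ℕ} (h : SecondMomentRange r (Fintype.card K) c a)
    (hm : m ≤ c * Fintype.card V) {B : Finset (V → K)}
    (hB : ∀ σ ∈ B, ∀ i, colorDensity σ i ≤ a) {σ : V → K} (hσ : σ ∈ B) :
    ∑ τ ∈ B, uniformProb univ (fun e : Fin r → V => ¬ Monochromatic σ e ∧ ¬ Monochromatic τ e) ^ m /
        ((1 - monoDensity r σ) ^ m * (1 - monoDensity r τ) ^ m) ≤
      (Fintype.card K : ℝ) ^ Fintype.card V *
        (Fintype.card V + 1 : ℝ) ^ (Fintype.card K * Fintype.card K) :=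
  calc ∑ τ ∈ B, uniformProb univ
            (fun e : Fin r → V => ¬ Monochromatic σ e ∧ ¬ Monochromatic τ e) ^ m /
          ((1 - monoDensity r σ) ^ m * (1 - monoDensity r τ) ^ m)
      ≤ ∑ τ ∈ B, (Fintype.card K : ℝ) ^ Fintype.card V *
          ∏ v, colorDensity (fun v => (σ v, τ v)) (σ v, τ v) / colorDensity σ (σ v) :=
        sum_le_sum fun τ hτ => correlation_le hr h hm (hB σ hσ) (hB τ hτ)
    _ ≤ ∑ τ : V → K, (Fintype.card K : ℝ) ^ Fintype.card V *
          ∏ v, colorDensity (fun v => (σ v, τ v)) (σ v, τ v) / colorDensity σ (σ v) :=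
        sum_le_sum_of_subset_of_nonneg (subset_univ _) fun τ _ _ => mul_nonneg (by positivity) <|
          prod_nonneg fun v _ => div_nonneg (colorDensity_nonneg _ _) (colorDensity_nonneg _ _)
    _ ≤ (Fintype.card K : ℝ) ^ Fintype.card V *
          (Fintype.card V + 1 : ℝ) ^ (Fintype.card K * Fintype.card K) := by
        rw [← mul_sum]
        exact mul_le_mul_of_nonneg_left (sum_prod_colorDensity_le σ) (by positivity)

lemma card_le_mul_uniformProb_tupleColorable [Fintype V] [Nonempty V] [Fintype K] (hr : 3 ≤ r)
    {c a : ℝ} {m : ℕ} (h : SecondMomentRange r (Fintype.card K) c a)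
    (hm : m ≤ c * Fintype.card V) (B : Finset (V → K))
    (hB : ∀ σ ∈ B, ∀ i, colorDensity σ i ≤ a) :
    (#B : ℝ) ≤ (Fintype.card K : ℝ) ^ Fintype.card V *
        (Fintype.card V + 1 : ℝ) ^ (Fintype.card K * Fintype.card K) *
      uniformProb univ (fun ω : Fin m → Fin r → V => TupleColorable K ω) := by
  refine (card_le_mul_uniformProb_exists univ B
    (fun σ (ω : Fin m → Fin r → V) => ∀ i, ¬ Monochromatic σ (ω i)) ?_ fun σ hσ => ?_).trans
      (mul_le_mul_of_nonneg_left (uniformProb_mono fun ω _ ⟨σ, _, hσ⟩ => ⟨σ, hσ⟩) (by positivity))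
  · intro σ hσ
    rw [uniformProb_forall_not_monochromatic]
    have := (monoDensity_le_pow (r := r) (by omega) (hB σ hσ)).trans_lt h.pow_lt_one
    exact pow_pos (sub_pos.2 this) m
  · simp only [uniformProb_forall_not_monochromatic_and, uniformProb_forall_not_monochromatic]
    exact sum_correlation_le hr h hm hB hσ

lemma uniformProb_lt_colorDensity_le [Fintype K] [Nonempty K] {n : ℕ} (hn : 0 < n) (i : K) {β : ℝ}
    (hβ : 0 ≤ β) :
    uniformProb univ (fun σ : Fin n → K => (1 + β) / Fintype.card K < colorDensity σ i) ≤
      exp (-(2 * (β / Fintype.card K) ^ 2) * n) := by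
  have hn' : (0 : ℝ) < n := Nat.cast_pos.2 hn
  let classSize : (Fin n → K) → ℝ := fun σ => ∑ v, if σ v = i then (1 : ℝ) else 0
  have colorDensity_eq : ∀ σ, colorDensity σ i = classSize σ / n := fun σ => by
    rw [colorDensity, uniformProb_eq_expect, Fintype.expect_eq_sum_div_card, Fintype.card_fin]
  have bounded_differences : ∀ σ v x, classSize (Function.update σ v x) ≤ classSize σ + 1 := by
    intro σ v x
    calc classSize (Function.update σ v x)
        ≤ ∑ w, ((if σ w = i then (1 : ℝ) else 0) + if w = v then 1 else 0) := by
          refine sum_le_sum fun w _ => ?_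
          obtain rfl | hw := eq_or_ne w v
          · rw [if_pos rfl]
            split_ifs <;> norm_num
          · rw [Function.update_of_ne hw, if_neg hw, add_zero]
      _ = classSize σ + 1 := by
          simp only [classSize, sum_add_distrib, sum_ite_eq', mem_univ, if_true]
  have mean : 𝔼 σ, classSize σ = n * (1 / Fintype.card K) := by
    have each : ∀ v : Fin n, 𝔼 σ : Fin n → K, (if σ v = i then (1 : ℝ) else 0) =
        1 / Fintype.card K := fun v => by
      rw [expect_apply (fun x => if x = i then (1 : ℝ) else 0) v, Fintype.expect_ite_eq']
      simp
    simp only [classSize, expect_sum_comm, each, sum_const, card_univ, Fintype.card_fin,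
      nsmul_eq_mul]
  refine (uniformProb_mono fun σ _ hσ => ?_).trans ((uniformProb_expect_add_le classSize
    bounded_differences (s := n * (β / Fintype.card K)) (by positivity)).trans_eq ?_)
  · rw [colorDensity_eq, lt_div_iff₀ hn'] at hσ
    rw [mean]
    exact le_of_eq_of_le (by ring) hσ.le
  · congr 1
    field_simp

lemma uniformProb_exists_lt_colorDensity_le [Fintype K] [Nonempty K] {n : ℕ} (hn : 0 < n) {β : ℝ}
    (hβ : 0 ≤ β) :
    uniformProb univ (fun σ : Fin n → K => ∃ i, (1 + β) / Fintype.card K < colorDensity σ i) ≤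
      Fintype.card K * exp (-(2 * (β / Fintype.card K) ^ 2) * n) := by
  have union_bound := uniformProb_exists_le univ univ fun (i : K) (σ : Fin n → K) =>
    (1 + β) / Fintype.card K < colorDensity σ i
  simp only [mem_univ, true_and] at union_bound
  refine union_bound.trans ?_
  rw [← card_univ, ← nsmul_eq_mul]
  exact sum_le_card_nsmul _ _ _ fun i _ => uniformProb_lt_colorDensity_le hn i hβ

lemma tendsto_succ_pow_mul_exp_neg_mul (p : ℕ) {κ : ℝ} (hκ : 0 < κ) :
    Tendsto (fun n : ℕ => (n + 1 : ℝ) ^ p * exp (-κ * n)) atTop (nhds 0) := by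
  have shifted := ((tendsto_pow_const_mul_const_pow_of_lt_one p (exp_pos (-κ)).le
    (exp_lt_one_iff.2 (neg_lt_zero.2 hκ))).comp (tendsto_add_atTop_nat 1)).mul_const (exp κ)
  rw [zero_mul] at shifted
  refine shifted.congr fun n => ?_
  simp only [Function.comp_apply, ← exp_nat_mul, mul_assoc, ← exp_add]
  push_cast
  ring_nf

lemma eventually_half_le_mul_uniformProb_tupleColorable [Fintype K] [Nonempty K] (hr : 3 ≤ r)
    {c β : ℝ} (hβ : 0 < β)
    (h : SecondMomentRange r (Fintype.card K) c ((1 + β) / Fintype.card K))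
    {m : ℕ → ℕ} (hm : ∀ n, (m n : ℝ) ≤ c * n) :
    ∀ᶠ n : ℕ in atTop, 1 / 2 ≤ (n + 1 : ℝ) ^ (Fintype.card K * Fintype.card K) *
      uniformProb univ (fun ω : Fin (m n) → Fin r → Fin n => TupleColorable K ω) := by
  have unbalanced_tendsto := (tendsto_succ_pow_mul_exp_neg_mul 0
    (κ := 2 * (β / Fintype.card K) ^ 2) (by positivity)).const_mul (Fintype.card K : ℝ)
  simp only [pow_zero, one_mul, mul_zero] at unbalanced_tendsto
  filter_upwards [unbalanced_tendsto.eventually_le_const (half_pos one_pos),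
    eventually_gt_atTop 0] with n unbalanced_le hn
  have : NeZero n := ⟨hn.ne'⟩
  let balanced : Finset (Fin n → K) := {σ | ∀ i, colorDensity σ i ≤ (1 + β) / Fintype.card K}
  have half_le : 1 / 2 ≤ (#balanced : ℝ) / (Fintype.card K : ℝ) ^ n := by
    have card_pi : (Fintype.card K : ℝ) ^ n = #(univ : Finset (Fin n → K)) := by simp
    have tail := uniformProb_exists_lt_colorDensity_le (K := K) hn hβ.le
    rw [card_pi, ← uniformProb_eq_card_div]
    simp only [← not_lt, ← not_exists]
    rw [uniformProb_not univ_nonempty]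
    linarith
  have second_moment := card_le_mul_uniformProb_tupleColorable hr h (V := Fin n) (m := m n)
    (by simpa only [Fintype.card_fin] using hm n) balanced fun σ hσ => (mem_filter.1 hσ).2
  refine half_le.trans ((div_le_iff₀' (by positivity)).2 (second_moment.trans_eq ?_))
  simp only [Fintype.card_fin, mul_assoc]

end Colorable

section Sparse

variable {V K ι : Type*} {r : ℕ}

lemma exists_update_forall_not_monochromatic {ω : ι → Fin r → V} {I : Finset ι} {v : V}
    (hdeg : #{i ∈ I | ∃ a, ω i a = v} < r) (hloop : ∀ i, ∃ a, ω i a ≠ v) {c : V → Fin r}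
    (hc : ∀ i ∈ I, (∀ a, ω i a ≠ v) → ¬ Monochromatic c (ω i)) :
    ∃ q, ∀ i ∈ I, ¬ Monochromatic (Function.update c v q) (ω i) := by
  choose other other_ne using hloop
  obtain ⟨q, q_free⟩ : ∃ q, q ∉ image (fun i => c (ω i (other i))) {i ∈ I | ∃ a, ω i a = v} := by
    by_contra! all_used
    exact (card_image_le.trans_lt hdeg).ne ((card_eq_iff_eq_univ _).2
      (eq_univ_of_forall all_used) |>.trans (Fintype.card_fin r))
  refine ⟨q, fun i hi ⟨j, hj⟩ => ?_⟩
  by_cases hv : ∃ a, ω i a = v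
  · obtain ⟨a, ha⟩ := hv
    refine q_free (mem_image.2 ⟨i, mem_filter.2 ⟨hi, a, ha⟩, ?_⟩)
    rw [← Function.update_of_ne (other_ne i) q c, hj, ← hj a, ha, Function.update_self]
  · simp only [not_exists] at hv
    exact hc i hi hv ⟨j, fun a => (Function.update_of_ne (hv a) q c).symm.trans (hj a)⟩

variable [Fintype ι]

/-- The indices of the tuples of the family `ω` all of whose entries lie in `W`. -/
noncomputable def tuplesInside (ω : ι → Fin r → V) (W : Finset V) : Finset ι :=
  {i | ∀ a, ω i a ∈ W}

lemma mem_tuplesInside {ω : ι → Fin r → V} {W : Finset V} {i : ι} :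
    i ∈ tuplesInside ω W ↔ ∀ a, ω i a ∈ W := by
  rw [tuplesInside, mem_filter_univ]

lemma exists_card_filter_lt_of_card_tuplesInside_lt {ω : ι → Fin r → V} {U : Finset V}
    (hr : 0 < r) (h : #(tuplesInside ω U) < #U) :
    ∃ v ∈ U, #{i ∈ tuplesInside ω U | ∃ a, ω i a = v} < r := by
  by_contra! large_degree
  refine h.not_ge (Nat.le_of_mul_le_mul_right
    (card_mul_le_card_mul (fun v i => ∃ a, ω i a = v) large_degree fun i _ => ?_) hr)
  calc #{v ∈ U | ∃ a, ω i a = v}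
      ≤ #(univ.image (ω i)) := card_le_card fun v hv => by
        simpa only [mem_image, mem_univ, true_and] using (mem_filter.1 hv).2
    _ ≤ r := card_image_le.trans_eq (card_fin r)

/- Sparsity gives a vertex lying in fewer than `r` of the tuples; colour the rest first. -/
lemma exists_coloring_of_sparse (hr : 0 < r) (ω : ι → Fin r → V) (U : Finset V)
    (hU : ∀ W ⊆ U, W.Nonempty → #(tuplesInside ω W) < #W) :
    ∃ c : V → Fin r, ∀ i ∈ tuplesInside ω U, ¬ Monochromatic c (ω i) := by
  induction U using Finset.strongInduction with
  | H U ih =>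
    obtain rfl | hne := U.eq_empty_or_nonempty
    · exact ⟨fun _ => ⟨0, hr⟩, fun i hi => absurd (mem_tuplesInside.1 hi ⟨0, hr⟩) (notMem_empty _)⟩
    obtain ⟨v, hvU, hdeg⟩ :=
      exists_card_filter_lt_of_card_tuplesInside_lt hr (hU U subset_rfl hne)
    obtain ⟨c, hc⟩ := ih (U.erase v) (erase_ssubset hvU) fun W hW =>
      hU W (hW.trans (erase_subset _ _))
    have no_loop : ∀ i, ∃ a, ω i a ≠ v := fun i => by
      by_contra! loop
      have sparse_singleton := hU {v} (singleton_subset_iff.2 hvU) (singleton_nonempty v)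
      rw [card_singleton, Nat.lt_one_iff, card_eq_zero] at sparse_singleton
      exact notMem_empty i
        (sparse_singleton ▸ mem_tuplesInside.2 fun a => mem_singleton.2 (loop a))
    obtain ⟨q, hq⟩ := exists_update_forall_not_monochromatic hdeg no_loop fun i hi avoids =>
      hc i (mem_tuplesInside.2 fun a => mem_erase.2 ⟨avoids a, mem_tuplesInside.1 hi a⟩)
    exact ⟨_, hq⟩

/- Recolour the first vertex of each monochromatic tuple with a second palette. -/
lemma tupleColorable_sum_of_sparse (hr : 0 < r) {ω : ι → Fin r → V} {N : ℕ}
    (hsparse : ∀ W : Finset V, W.Nonempty → #W ≤ N → #(tuplesInside ω W) < #W)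
    {σ : V → K} (hσ : #{i | Monochromatic σ (ω i)} ≤ N) :
    TupleColorable (K ⊕ Fin r) ω := by
  let first : Fin r := ⟨0, hr⟩
  let U : Finset V := image (fun i => ω i first) {i | Monochromatic σ (ω i)}
  have card_U : #U ≤ N := card_image_le.trans hσ
  obtain ⟨c, hc⟩ := exists_coloring_of_sparse hr ω U fun W hW hne =>
    hsparse W hne ((card_le_card hW).trans card_U)
  refine ⟨fun v => if v ∈ U then .inr (c v) else .inl (σ v), ?_⟩
  rintro i ⟨j | j, hj⟩
  · have old_color : ∀ a, ω i a ∉ U ∧ σ (ω i a) = j := fun a => by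
      simpa only [ite_eq_iff, reduceCtorEq, and_false, false_or, Sum.inl.injEq] using hj a
    exact (old_color first).1 (mem_image_of_mem _
      ((mem_filter_univ i).2 ⟨j, fun a => (old_color a).2⟩))
  · have new_color : ∀ a, ω i a ∈ U ∧ c (ω i a) = j := fun a => by
      simpa only [ite_eq_iff, reduceCtorEq, and_false, or_false, Sum.inr.injEq] using hj a
    exact hc i (mem_tuplesInside.2 fun a => (new_color a).1) ⟨j, fun a => (new_color a).2⟩

end Sparse

section SmallSubsets

variable {r n m : ℕ}

lemma uniformProb_subset_tuplesInside {V ι : Type*} [Fintype V] [Nonempty V] [Fintype ι]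
    [DecidableEq ι] (W : Finset V) (I : Finset ι) :
    uniformProb univ (fun ω : ι → Fin r → V => I ⊆ tuplesInside ω W) =
      ((#W : ℝ) / Fintype.card V) ^ (r * #I) := by
  have inside_each : ∀ i : ι, uniformProb univ (fun e : Fin r → V => i ∈ I → ∀ a, e a ∈ W) =
      if i ∈ I then ((#W : ℝ) / Fintype.card V) ^ r else 1 := fun i => by
    split_ifs with hi
    · simp only [hi, forall_const]
      rw [uniformProb_forall fun _ v => v ∈ W, prod_const, card_fin, uniformProb_eq_card_div,
        filter_univ_mem, card_univ]
    · rw [uniformProb_eq_card_div]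
      simp [hi, div_self]
  simp only [Finset.subset_iff, mem_tuplesInside]
  rw [uniformProb_forall fun i (e : Fin r → V) => i ∈ I → ∀ a, e a ∈ W,
    prod_congr rfl fun i _ => inside_each i, prod_ite_mem, univ_inter, prod_const, pow_mul]

lemma choose_mul_choose_mul_pow_le (hr : 3 ≤ r) (hn : 0 < n) {u : ℕ} (hun : u ≤ n) {c : ℝ}
    (hm : (m : ℝ) ≤ c * n) :
    (n.choose u : ℝ) * (m.choose u * ((u : ℝ) / n) ^ (r * u)) ≤ (c * exp 2 * u / n) ^ u := by
  have hn' : (0 : ℝ) < n := Nat.cast_pos.2 hn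
  have hc : 0 ≤ c := nonneg_of_mul_nonneg_left (m.cast_nonneg.trans hm) hn'
  have choose_le : (m.choose u : ℝ) ≤ (c * n) ^ u / u.factorial :=
    (Nat.choose_le_pow_div u m).trans (by gcongr)
  have pow_le : ((u : ℝ) / n) ^ (r * u) ≤ (((u : ℝ) / n) ^ u) ^ 3 := by
    rw [← pow_mul, mul_comm u 3]
    exact pow_le_pow_of_le_one (by positivity)
      (div_le_one_of_le₀ (Nat.cast_le.2 hun) hn'.le) (by gcongr)
  calc (n.choose u : ℝ) * (m.choose u * ((u : ℝ) / n) ^ (r * u))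
      ≤ (n : ℝ) ^ u / u.factorial * ((c * n) ^ u / u.factorial * (((u : ℝ) / n) ^ u) ^ 3) := by
        gcongr
        exact Nat.choose_le_pow_div u n
    _ = c ^ u * ((u : ℝ) ^ u / u.factorial) ^ 2 * (u / n) ^ u := by
        rw [mul_pow, div_pow]
        field_simp
    _ ≤ c ^ u * exp u ^ 2 * (u / n) ^ u := by
        gcongr
        exact pow_div_factorial_le_exp u u.cast_nonneg u
    _ = (c * exp 2 * u / n) ^ u := by
        rw [← exp_nat_mul, mul_comm ((2 : ℕ) : ℝ), exp_nat_mul, ← mul_pow, ← mul_pow, mul_div_assoc,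
          Nat.cast_ofNat]

lemma uniformProb_exists_card_le_tuplesInside_le [NeZero n] (u : ℕ) :
    uniformProb univ (fun ω : Fin m → Fin r → Fin n =>
        ∃ W : Finset (Fin n), #W = u ∧ #W ≤ #(tuplesInside ω W)) ≤
      n.choose u * (m.choose u * ((u : ℝ) / n) ^ (r * u)) :=
  calc uniformProb univ (fun ω : Fin m → Fin r → Fin n =>
          ∃ W : Finset (Fin n), #W = u ∧ #W ≤ #(tuplesInside ω W))
      ≤ uniformProb univ (fun ω : Fin m → Fin r → Fin n =>
          ∃ W ∈ powersetCard u univ, ∃ I ∈ powersetCard u univ, I ⊆ tuplesInside ω W) := by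
        refine uniformProb_mono fun ω _ => ?_
        rintro ⟨W, rfl, hW⟩
        obtain ⟨I, hI, card_I⟩ := exists_subset_card_eq hW
        exact ⟨W, mem_powersetCard_univ.2 rfl, I, mem_powersetCard_univ.2 card_I, hI⟩
    _ ≤ ∑ W ∈ powersetCard u (univ : Finset (Fin n)), ∑ I ∈ powersetCard u (univ : Finset (Fin m)),
          uniformProb univ (fun ω : Fin m → Fin r → Fin n => I ⊆ tuplesInside ω W) :=
        (uniformProb_exists_le _ _ _).trans (sum_le_sum fun W _ => uniformProb_exists_le _ _ _)
    _ = ∑ _W ∈ powersetCard u (univ : Finset (Fin n)),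
          ∑ _I ∈ powersetCard u (univ : Finset (Fin m)),
            ((u : ℝ) / n) ^ (r * u) :=
        sum_congr rfl fun W hW => sum_congr rfl fun I hI => by
          rw [uniformProb_subset_tuplesInside, mem_powersetCard_univ.1 hW,
            mem_powersetCard_univ.1 hI, Fintype.card_fin]
    _ = n.choose u * (m.choose u * ((u : ℝ) / n) ^ (r * u)) := by
        simp only [sum_const, card_powersetCard, card_univ, Fintype.card_fin, nsmul_eq_mul]

lemma mul_succ_pow_succ_le {x : ℝ} (hx : 0 ≤ x) {u : ℕ} (h : x * (u + 1 : ℕ) ≤ 1 / 4) :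
    (x * (u + 1 : ℕ)) ^ (u + 1) ≤ x * (1 / 2) ^ u := by
  have succ_le : ((u + 1 : ℕ) : ℝ) ≤ 2 ^ u := by exact_mod_cast Nat.lt_two_pow_self (n := u)
  calc (x * (u + 1 : ℕ)) ^ (u + 1)
      = (x * (u + 1 : ℕ)) ^ u * (x * (u + 1 : ℕ)) := pow_succ _ _
    _ ≤ (1 / 4) ^ u * (x * 2 ^ u) := by gcongr
    _ = x * (1 / 2) ^ u := by
        rw [show (1 / 2 : ℝ) = 1 / 4 * 2 by norm_num, mul_pow]
        ring

lemma uniformProb_exists_dense_le [NeZero n] (hr : 3 ≤ r) {N : ℕ} (hNn : N ≤ n) {c : ℝ}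
    (hm : (m : ℝ) ≤ c * n) (hN : c * exp 2 * N / n ≤ 1 / 4) :
    uniformProb univ (fun ω : Fin m → Fin r → Fin n =>
        ∃ W : Finset (Fin n), W.Nonempty ∧ #W ≤ N ∧ #W ≤ #(tuplesInside ω W)) ≤
      2 * (c * exp 2) / n := by
  have hn : 0 < n := Nat.pos_of_neZero n
  have hc : 0 ≤ c := nonneg_of_mul_nonneg_left (m.cast_nonneg.trans hm) (Nat.cast_pos.2 hn)
  have term_le : ∀ u ∈ range N,
      (c * exp 2 * (u + 1 : ℕ) / n) ^ (u + 1) ≤ c * exp 2 / n * (1 / 2) ^ u := fun u hu => by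
    have base_le : c * exp 2 / n * (u + 1 : ℕ) ≤ 1 / 4 := by
      rw [← div_mul_eq_mul_div] at hN
      exact hN.trans' (by gcongr; exact mem_range.1 hu)
    rw [← div_mul_eq_mul_div]
    exact mul_succ_pow_succ_le (by positivity) base_le
  calc uniformProb univ (fun ω : Fin m → Fin r → Fin n =>
          ∃ W : Finset (Fin n), W.Nonempty ∧ #W ≤ N ∧ #W ≤ #(tuplesInside ω W))
      ≤ uniformProb univ (fun ω : Fin m → Fin r → Fin n =>
          ∃ u ∈ range N, ∃ W : Finset (Fin n), #W = u + 1 ∧ #W ≤ #(tuplesInside ω W)) := by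
        refine uniformProb_mono fun ω _ ⟨W, hne, hWN, hW⟩ => ?_
        have succ_pred := Nat.sub_add_cancel (card_pos.2 hne)
        exact ⟨#W - 1, mem_range.2 (by omega), W, succ_pred.symm, hW⟩
    _ ≤ ∑ u ∈ range N, (c * exp 2 * (u + 1 : ℕ) / n) ^ (u + 1) :=
        (uniformProb_exists_le _ _ _).trans <| sum_le_sum fun u hu =>
          (uniformProb_exists_card_le_tuplesInside_le (u + 1)).trans <|
            choose_mul_choose_mul_pow_le hr hn (le_trans (mem_range.1 hu) hNn) hm
    _ ≤ c * exp 2 / n * ∑ u ∈ range N, (1 / 2) ^ u :=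
        (sum_le_sum term_le).trans_eq (mul_sum ..).symm
    _ ≤ c * exp 2 / n * 2 := by
        gcongr
        exact sum_geometric_two_le N
    _ = 2 * (c * exp 2) / n := by ring

end SmallSubsets

section MinMonochromatic

variable {V K : Type*} {r m : ℕ}

/-- The least number of monochromatic tuples of the family `ω` over all colourings with colours
in `K`; it is `0` when there is no colouring at all. -/
noncomputable def minMonochromatic (K : Type*) (ω : Fin m → Fin r → V) : ℕ :=
  ⨅ σ : V → K, #{i | Monochromatic σ (ω i)}

lemma minMonochromatic_le (ω : Fin m → Fin r → V) (σ : V → K) :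
    minMonochromatic K ω ≤ #{i | Monochromatic σ (ω i)} :=
  ciInf_le (OrderBot.bddBelow _) σ

lemma exists_card_monochromatic_eq_minMonochromatic [Nonempty K] (ω : Fin m → Fin r → V) :
    ∃ σ : V → K, #{i | Monochromatic σ (ω i)} = minMonochromatic K ω :=
  ciInf_mem _

lemma minMonochromatic_eq_zero_of_tupleColorable {ω : Fin m → Fin r → V}
    (h : TupleColorable K ω) : minMonochromatic K ω = 0 := by
  obtain ⟨σ, hσ⟩ := h
  refine Nat.le_zero.1 ((minMonochromatic_le ω σ).trans_eq ?_)
  rw [filter_false_of_mem fun i _ => hσ i, card_empty]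

lemma minMonochromatic_update_le [Nonempty K] (ω : Fin m → Fin r → V) (i : Fin m) (e : Fin r → V) :
    minMonochromatic K (Function.update ω i e) ≤ minMonochromatic K ω + 1 := by
  obtain ⟨σ, hσ⟩ := exists_card_monochromatic_eq_minMonochromatic (K := K) ω
  calc minMonochromatic K (Function.update ω i e)
      ≤ #{j | Monochromatic σ (Function.update ω i e j)} := minMonochromatic_le _ σ
    _ ≤ #(insert i ({j | Monochromatic σ (ω j)} : Finset (Fin m))) := card_le_card fun j hj => by
        obtain rfl | hji := eq_or_ne j i
        · exact mem_insert_self _ _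
        · rw [mem_filter_univ, Function.update_of_ne hji] at hj
          exact mem_insert_of_mem ((mem_filter_univ j).2 hj)
    _ ≤ minMonochromatic K ω + 1 := (card_insert_le _ _).trans_eq (by rw [hσ])

/- `minMonochromatic` concentrates and vanishes on the colourable families, which are not too rare,
so it is seldom linear in `n`. -/
lemma uniformProb_le_minMonochromatic_le [Nonempty K] {n : ℕ} [NeZero n] {c δ : ℝ} (hδ : 0 < δ)
    (hm : (m : ℝ) ≤ c * n) :
    uniformProb univ (fun ω : Fin m → Fin r → Fin n => TupleColorable K ω) *
        uniformProb univ (fun ω : Fin m → Fin r → Fin n => δ * n ≤ minMonochromatic K ω) ≤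
      exp (-(δ ^ 2 / c) * n) := by
  have hn : (0 : ℝ) < n := Nat.cast_pos.2 (Nat.pos_of_neZero n)
  obtain rfl | hm0 := m.eq_zero_or_pos
  · have not_le : ∀ ω : Fin 0 → Fin r → Fin n, ¬ δ * n ≤ minMonochromatic K ω := fun ω => by
      rw [minMonochromatic_eq_zero_of_tupleColorable
        ⟨fun _ => Classical.arbitrary K, fun i => i.elim0⟩, Nat.cast_zero, not_le]
      positivity
    simp only [not_le]
    rw [uniformProb_eq_card_div univ fun _ => False, filter_false, card_empty, Nat.cast_zero,
      zero_div, mul_zero]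
    exact exp_nonneg _
  calc uniformProb univ (fun ω : Fin m → Fin r → Fin n => TupleColorable K ω) *
          uniformProb univ (fun ω : Fin m → Fin r → Fin n => δ * n ≤ minMonochromatic K ω)
      ≤ uniformProb univ (fun ω : Fin m → Fin r → Fin n => (minMonochromatic K ω : ℝ) ≤ 0) *
          uniformProb univ (fun ω : Fin m → Fin r → Fin n => 0 + δ * n ≤ minMonochromatic K ω) := by
        rw [zero_add]
        refine mul_le_mul_of_nonneg_right (uniformProb_mono fun ω _ h => ?_)
          (uniformProb_nonneg _ _)
        rw [minMonochromatic_eq_zero_of_tupleColorable h, Nat.cast_zero]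
    _ ≤ exp (-((δ * n) ^ 2 / m)) := by
        refine uniformProb_le_mul_uniformProb_ge_le (fun ω => (minMonochromatic K ω : ℝ))
          (fun ω i e => ?_) 0 (by positivity)
        exact_mod_cast minMonochromatic_update_le ω i e
    _ ≤ exp (-((δ * n) ^ 2 / (c * n))) := by
        gcongr
    _ = exp (-(δ ^ 2 / c) * n) := by
        congr 1
        field_simp

lemma uniformProb_not_tupleColorable_sum_le [Nonempty K] (hr : 3 ≤ r) {n : ℕ} [NeZero n]
    {c δ : ℝ} (hm : (m : ℝ) ≤ c * n) (hδ : 0 ≤ δ) (hδ1 : δ ≤ 1) (hcδ : c * exp 2 * δ ≤ 1 / 4) :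
    uniformProb univ (fun ω : Fin m → Fin r → Fin n => ¬ TupleColorable (K ⊕ Fin r) ω) ≤
      uniformProb univ (fun ω : Fin m → Fin r → Fin n => δ * n ≤ minMonochromatic K ω) +
        2 * (c * exp 2) / n := by
  have hn : (0 : ℝ) < n := Nat.cast_pos.2 (Nat.pos_of_neZero n)
  have hc : 0 ≤ c := nonneg_of_mul_nonneg_left (m.cast_nonneg.trans hm) hn
  have floor_le : (⌊δ * n⌋₊ : ℝ) ≤ δ * n := Nat.floor_le (by positivity)
  have dense_le := uniformProb_exists_dense_le hr (N := ⌊δ * n⌋₊)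
    (Nat.floor_le_of_le (mul_le_of_le_one_left hn.le hδ1)) hm (by
      rw [div_le_iff₀ hn]
      calc c * exp 2 * ⌊δ * n⌋₊ ≤ c * exp 2 * (δ * n) := by gcongr
        _ = c * exp 2 * δ * n := by ring
        _ ≤ 1 / 4 * n := by gcongr)
  refine (uniformProb_mono fun ω _ not_colorable => ?_).trans
    ((uniformProb_or_le _ _ _).trans (add_le_add_right dense_le _))
  by_contra! few_and_sparse
  obtain ⟨few, sparse⟩ := few_and_sparse
  obtain ⟨σ, hσ⟩ := exists_card_monochromatic_eq_minMonochromatic (K := K) ω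
  exact not_colorable (tupleColorable_sum_of_sparse (by omega) sparse
    (hσ.trans_le (Nat.le_floor few.le)))

lemma tendsto_uniformProb_not_tupleColorable_sum [Fintype K] [Nonempty K] (hr : 3 ≤ r)
    {c β : ℝ} (hc : 0 < c) (hβ : 0 < β)
    (h : SecondMomentRange r (Fintype.card K) c ((1 + β) / Fintype.card K))
    {m : ℕ → ℕ} (hm : ∀ n, (m n : ℝ) ≤ c * n) :
    Tendsto (fun n : ℕ => uniformProb univ
      (fun ω : Fin (m n) → Fin r → Fin n => ¬ TupleColorable (K ⊕ Fin r) ω)) atTop (nhds 0) := by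
  set δ : ℝ := min 1 (1 / (4 * (c * exp 2)))
  have δ_pos : 0 < δ := by positivity
  have mul_δ_le : c * exp 2 * δ ≤ 1 / 4 := by
    calc c * exp 2 * δ ≤ c * exp 2 * (1 / (4 * (c * exp 2))) := by
          gcongr
          exact min_le_right _ _
      _ = 1 / 4 := by field_simp
  let p := Fintype.card K * Fintype.card K
  have bound_tendsto := ((tendsto_succ_pow_mul_exp_neg_mul p
    (κ := δ ^ 2 / c) (by positivity)).const_mul 2).add
      (tendsto_const_div_atTop_nhds_zero_nat (2 * (c * exp 2)))
  rw [mul_zero, add_zero] at bound_tendsto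
  refine squeeze_zero' (.of_forall fun n => uniformProb_nonneg _ _) ?_ bound_tendsto
  filter_upwards [eventually_half_le_mul_uniformProb_tupleColorable hr hβ h hm,
    eventually_gt_atTop 0] with n half_le hn
  have : NeZero n := ⟨hn.ne'⟩
  refine (uniformProb_not_tupleColorable_sum_le (K := K) hr (hm n) δ_pos.le (min_le_left _ _)
    mul_δ_le).trans (add_le_add_left ?_ _)
  rw [← div_le_iff₀' two_pos, div_eq_inv_mul, ← one_div]
  have prob_nonneg := uniformProb_nonneg univ
    fun ω : Fin (m n) → Fin r → Fin n => δ * n ≤ minMonochromatic K ω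
  refine (mul_le_mul_of_nonneg_right half_le prob_nonneg).trans ?_
  rw [mul_assoc]
  gcongr
  exact uniformProb_le_minMonochromatic_le δ_pos (hm n)

end MinMonochromatic

section IndependentTuples

variable {r n : ℕ}

lemma uniformProb_forall_not_subset_le {V : Type*} [Fintype V] [Nonempty V] (m : ℕ)
    (S : Finset V) :
    uniformProb univ (fun ω : Fin m → Fin r → V => ∀ i, ¬ ∀ a, ω i a ∈ S) ≤
      exp (-(((#S : ℝ) / Fintype.card V) ^ r * m)) := by
  have one_tuple : uniformProb univ (fun e : Fin r → V => ¬ ∀ a, e a ∈ S) =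
      1 - ((#S : ℝ) / Fintype.card V) ^ r := by
    rw [uniformProb_not univ_nonempty, uniformProb_forall fun _ v => v ∈ S, prod_const, card_univ,
      Fintype.card_fin, uniformProb_eq_card_div, filter_univ_mem, card_univ]
  rw [uniformProb_forall fun _ (e : Fin r → V) => ¬ ∀ a, e a ∈ S, prod_const, card_univ,
    Fintype.card_fin, mul_comm, ← mul_neg, exp_nat_mul]
  exact pow_le_pow_left₀ (uniformProb_nonneg _ _) (one_tuple.trans_le (one_sub_le_exp_neg _)) m

lemma choose_le_exp_mul_one_sub_log {y : ℝ} (hy : 0 < y) {s : ℕ} (hs : 0 < s) (hys : y * n ≤ s) :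
    (n.choose s : ℝ) ≤ exp (s * (1 - log y)) := by
  have hs' : (0 : ℝ) < s := Nat.cast_pos.2 hs
  calc (n.choose s : ℝ) ≤ (n : ℝ) ^ s / s.factorial := Nat.choose_le_pow_div s n
    _ = ((n : ℝ) / s) ^ s * ((s : ℝ) ^ s / s.factorial) := by
        rw [div_pow]
        field_simp
    _ ≤ (1 / y) ^ s * exp s := by
        gcongr ?_ ^ s * ?_
        · rw [div_le_div_iff₀ hs' hy, one_mul, mul_comm]
          exact hys
        · exact pow_div_factorial_le_exp _ hs'.le _
    _ = exp (s * (1 - log y)) := by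
        rw [mul_sub, sub_eq_add_neg, exp_add, mul_one, mul_comm, ← mul_neg, exp_nat_mul, ← log_inv,
          exp_log (inv_pos.2 hy), one_div]

lemma uniformProb_exists_forall_not_subset_le [NeZero n] (hr : 0 < r) {m : ℕ} {y c : ℝ} (hy : 0 < y)
    (hm : c * n ≤ m) {s : ℕ} (hs : 0 < s) (hys : y * n ≤ s) :
    uniformProb univ (fun ω : Fin m → Fin r → Fin n =>
        ∃ S : Finset (Fin n), #S = s ∧ ∀ i, ¬ ∀ a, ω i a ∈ S) ≤
      exp (-(c * y ^ (r - 1) - (1 - log y)) * s) := by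
  have hn : (0 : ℝ) < n := Nat.cast_pos.2 (Nat.pos_of_neZero n)
  have exponent_le : s * (c * y ^ (r - 1)) ≤ ((s : ℝ) / n) ^ r * m :=
    calc s * (c * y ^ (r - 1)) = y ^ (r - 1) * (s / n) * (c * n) := by field_simp
      _ ≤ y ^ (r - 1) * (s / n) * m := by gcongr
      _ ≤ ((s : ℝ) / n) ^ (r - 1) * (s / n) * m := by
          gcongr
          rwa [le_div_iff₀ hn]
      _ = ((s : ℝ) / n) ^ r * m := by rw [← pow_succ, Nat.sub_add_cancel hr]
  calc uniformProb univ (fun ω : Fin m → Fin r → Fin n =>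
          ∃ S : Finset (Fin n), #S = s ∧ ∀ i, ¬ ∀ a, ω i a ∈ S)
      ≤ uniformProb univ (fun ω : Fin m → Fin r → Fin n =>
          ∃ S ∈ powersetCard s univ, ∀ i, ¬ ∀ a, ω i a ∈ S) :=
        uniformProb_mono fun ω _ ⟨S, hS, h⟩ => ⟨S, mem_powersetCard_univ.2 hS, h⟩
    _ ≤ ∑ _S ∈ powersetCard s (univ : Finset (Fin n)), exp (-(((s : ℝ) / n) ^ r * m)) :=
        (uniformProb_exists_le _ _ _).trans <| sum_le_sum fun S hS => by
          simpa only [mem_powersetCard_univ.1 hS, Fintype.card_fin] using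
            uniformProb_forall_not_subset_le m S
    _ = n.choose s * exp (-(((s : ℝ) / n) ^ r * m)) := by
        rw [sum_const, card_powersetCard, card_univ, Fintype.card_fin, nsmul_eq_mul]
    _ ≤ exp (s * (1 - log y)) * exp (-(s * (c * y ^ (r - 1)))) := by
        gcongr
        exact choose_le_exp_mul_one_sub_log hy hs hys
    _ = exp (-(c * y ^ (r - 1) - (1 - log y)) * s) := by
        rw [← exp_add]
        ring_nf

lemma tendsto_uniformProb_exists_forall_not_subset (hr : 0 < r) {y c : ℝ} (hy : 0 < y)
    (hyc : 1 - log y < c * y ^ (r - 1)) {m : ℕ → ℕ} (hm : ∀ᶠ n : ℕ in atTop, c * n ≤ m n) :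
    Tendsto (fun n : ℕ => uniformProb univ (fun ω : Fin (m n) → Fin r → Fin n =>
      ∃ S : Finset (Fin n), #S = ⌈y * n⌉₊ ∧ ∀ i, ¬ ∀ a, ω i a ∈ S)) atTop (nhds 0) := by
  set κ := c * y ^ (r - 1) - (1 - log y)
  have κ_pos : 0 < κ := sub_pos.2 hyc
  have exp_tendsto := tendsto_succ_pow_mul_exp_neg_mul 0 (mul_pos κ_pos hy)
  simp only [pow_zero, one_mul] at exp_tendsto
  refine squeeze_zero' (.of_forall fun n => uniformProb_nonneg _ _) ?_ exp_tendsto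
  filter_upwards [hm, eventually_gt_atTop 0] with n hmn hn
  have : NeZero n := ⟨hn.ne'⟩
  refine (uniformProb_exists_forall_not_subset_le hr hy hmn
    (Nat.ceil_pos.2 (by positivity)) (Nat.le_ceil _)).trans (exp_le_exp.2 ?_)
  rw [neg_mul, neg_mul, neg_le_neg_iff, mul_assoc]
  exact mul_le_mul_of_nonneg_left (Nat.le_ceil _) κ_pos.le

end IndependentTuples

section EdgeFamily

variable {n r m : ℕ}

lemma mem_uniformEdgeFamily {E : Finset (Finset (Fin n))} :
    E ∈ uniformEdgeFamily n r m ↔ (∀ e ∈ E, #e = r) ∧ #E = m := by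
  simp only [uniformEdgeFamily, edgeCandidates, mem_filter, mem_powerset, Finset.subset_iff,
    mem_univ, true_and]

lemma card_uniformEdgeFamily : #(uniformEdgeFamily n r m) = (n.choose r).choose m := by
  have eq_powersetCard : uniformEdgeFamily n r m = powersetCard m (powersetCard r univ) := by
    ext E
    rw [mem_uniformEdgeFamily, mem_powersetCard, Finset.subset_iff]
    simp only [mem_powersetCard_univ]
  rw [eq_powersetCard, card_powersetCard, card_powersetCard, card_univ, Fintype.card_fin]

/-- The edge set of the hypergraph whose edges are the ranges of the tuples `ω i`. -/
noncomputable def edgeSet (ω : Fin m → Fin r → Fin n) : Finset (Finset (Fin n)) :=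
  univ.image fun i => univ.image (ω i)

lemma exists_edgeSet_eq {E : Finset (Finset (Fin n))} (hE : E ∈ uniformEdgeFamily n r m) :
    ∃ ω : Fin m → Fin r → Fin n, Function.Injective (fun i => univ.image (ω i)) ∧
      (∀ i, Function.Injective (ω i)) ∧ edgeSet ω = E := by
  obtain ⟨uniform, card_E⟩ := mem_uniformEdgeFamily.1 hE
  let edge : Fin m ≃ E := (equivFinOfCardEq card_E).symm
  let ω : Fin m → Fin r → Fin n := fun i => (edge i).1.orderEmbOfFin (uniform _ (edge i).2)
  have image_ω : ∀ i, univ.image (ω i) = edge i := fun i => image_orderEmbOfFin_univ _ _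
  refine ⟨ω, fun i j hij => edge.injective (Subtype.ext ?_), fun i =>
    (orderEmbOfFin _ _).injective, ?_⟩
  · simpa only [image_ω] using hij
  · ext e
    simp only [edgeSet, image_ω, mem_image, mem_univ, true_and]
    exact ⟨fun ⟨i, hi⟩ => hi ▸ (edge i).2, fun he =>
      ⟨edge.symm ⟨e, he⟩, by rw [edge.apply_symm_apply]⟩⟩

/- Reordering the edges and the vertices inside each edge gives distinct tuple families. -/
lemma factorial_mul_factorial_pow_le_card_edgeSet_eq {E : Finset (Finset (Fin n))}
    (hE : E ∈ uniformEdgeFamily n r m) :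
    m.factorial * r.factorial ^ m ≤ #{ω : Fin m → Fin r → Fin n | edgeSet ω = E} := by
  obtain ⟨ω, edges_injective, tuples_injective, rfl⟩ := exists_edgeSet_eq hE
  let reorder : Equiv.Perm (Fin m) × (Fin m → Equiv.Perm (Fin r)) → Fin m → Fin r → Fin n :=
    fun p i => ω (p.1 i) ∘ p.2 i
  have image_reorder : ∀ p i, univ.image (reorder p i) = univ.image (ω (p.1 i)) := fun p i => by
    rw [← image_image, image_univ_equiv]
  have reorder_injective : Function.Injective reorder := by
    rintro ⟨τ, ρ⟩ ⟨τ', ρ'⟩ h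
    obtain rfl : τ = τ' := Equiv.ext fun i => edges_injective <| by
      simpa only [image_reorder] using congrArg (univ.image <| · i) h
    refine Prod.ext rfl (funext fun i => Equiv.ext fun a =>
      tuples_injective (τ i) (congrFun (congrFun h i) a))
  calc m.factorial * r.factorial ^ m = #(univ.image reorder) := by
        simp [card_image_of_injective _ reorder_injective, Fintype.card_perm]
    _ ≤ #{ω' : Fin m → Fin r → Fin n | edgeSet ω' = edgeSet ω} := card_le_card fun ω' hω' => by
        obtain ⟨p, -, rfl⟩ := mem_image.1 hω'
        refine (mem_filter_univ _).2 ?_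
        simp only [edgeSet, image_reorder]
        rw [← Function.comp_def (fun i => univ.image (ω i)), ← image_image, image_univ_equiv]

lemma card_filter_uniformEdgeFamily_mul_le (B : Finset (Finset (Fin n)) → Prop) :
    #{E ∈ uniformEdgeFamily n r m | B E} * (m.factorial * r.factorial ^ m) ≤
      #{ω : Fin m → Fin r → Fin n | B (edgeSet ω)} :=
  calc #{E ∈ uniformEdgeFamily n r m | B E} * (m.factorial * r.factorial ^ m)
      ≤ ∑ E ∈ uniformEdgeFamily n r m with B E,
          #{ω : Fin m → Fin r → Fin n | edgeSet ω = E} :=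
        card_nsmul_le_sum _ _ _ fun _ hE =>
          factorial_mul_factorial_pow_le_card_edgeSet_eq (mem_filter.1 hE).1
    _ = #{ω : Fin m → Fin r → Fin n | edgeSet ω ∈ filter B (uniformEdgeFamily n r m)} :=
        sum_card_fiberwise_eq_card_filter _ _ _
    _ ≤ #{ω : Fin m → Fin r → Fin n | B (edgeSet ω)} :=
        card_le_card (monotone_filter_right _ fun _ _ h => (mem_filter.1 h).2)

lemma pow_mul_one_sub_sq_div_le_factorial_mul_choose (hn : 0 < n) (hrn : r ≤ n) :
    (n : ℝ) ^ r * (1 - (r : ℝ) ^ 2 / n) ≤ r.factorial * (n.choose r : ℝ) := by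
  have hn' : (0 : ℝ) < n := Nat.cast_pos.2 hn
  have hrn' : (r : ℝ) ≤ n := Nat.cast_le.2 hrn
  have bernoulli := one_add_mul_le_pow (a := -(((r : ℝ) - 1) / n)) (by
    have : ((r : ℝ) - 1) / n ≤ 1 := (div_le_one hn').2 (by linarith)
    linarith) r
  calc (n : ℝ) ^ r * (1 - (r : ℝ) ^ 2 / n)
      ≤ (n : ℝ) ^ r * (1 + r * -(((r : ℝ) - 1) / n)) := by
        gcongr
        have : (r : ℝ) * ((r - 1) / n) ≤ r ^ 2 / n := by
          rw [← mul_div_assoc]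
          gcongr
          nlinarith
        linarith
    _ ≤ (n : ℝ) ^ r * (1 + -(((r : ℝ) - 1) / n)) ^ r := by gcongr
    _ = ((n + 1 - r : ℕ) : ℝ) ^ r := by
        rw [← mul_pow, Nat.cast_sub (by omega)]
        push_cast
        field_simp
        ring
    _ ≤ r.factorial * (n.choose r : ℝ) := by
        exact_mod_cast (Nat.pow_sub_le_descFactorial n r).trans_eq
          (Nat.descFactorial_eq_factorial_mul_choose n r)

lemma pow_mul_one_sub_div_le_factorial_mul_choose_sub (hr : 2 ≤ r) {c : ℝ}
    (hm : m ≤ c * n) (hn : 0 < n) (hrn : r ≤ n) :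
    (n : ℝ) ^ r * (1 - ((r : ℝ) ^ 2 + r.factorial * c) / n) ≤
      r.factorial * ((n.choose r : ℝ) - m) := by
  have hn' : (0 : ℝ) < n := Nat.cast_pos.2 hn
  have factorial_mul_le : (r.factorial : ℝ) * m ≤ n ^ r * (r.factorial * c / n) :=
    calc (r.factorial : ℝ) * m ≤ r.factorial * c * n := by
          rw [mul_assoc]
          gcongr
      _ ≤ r.factorial * c * n ^ (r - 1) := by
          have hc : 0 ≤ c := nonneg_of_mul_nonneg_left (m.cast_nonneg.trans hm) hn'
          gcongr
          exact le_self_pow₀ (Nat.one_le_cast.2 hn) (by omega)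
      _ = n ^ r * (r.factorial * c / n) := by
          rw [← Nat.sub_add_cancel (show 1 ≤ r by omega), pow_succ, Nat.add_sub_cancel]
          field_simp
  have := pow_mul_one_sub_sq_div_le_factorial_mul_choose hn hrn
  rw [add_div, mul_sub (r.factorial : ℝ), ← sub_sub, mul_sub]
  linarith

lemma exp_neg_two_mul_le_one_sub {x : ℝ} (hx : 0 ≤ x) (hx2 : x ≤ 1 / 2) :
    exp (-(2 * x)) ≤ 1 - x := by
  rw [exp_neg, inv_le_iff_one_le_mul₀ (exp_pos _)]
  calc 1 ≤ (1 - x) * (2 * x + 1) := by nlinarith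
    _ ≤ (1 - x) * exp (2 * x) :=
        mul_le_mul_of_nonneg_left (add_one_le_exp _) (by linarith)

lemma pow_sub_le_choose_mul_factorial {N : ℕ} (hmN : m ≤ N) :
    ((N : ℝ) - m) ^ m ≤ N.choose m * m.factorial := by
  calc ((N : ℝ) - m) ^ m ≤ ((N + 1 - m : ℕ) : ℝ) ^ m := by
        rw [← Nat.cast_sub hmN]
        gcongr
        omega
    _ ≤ N.choose m * m.factorial := by
        rw [mul_comm]
        exact_mod_cast (Nat.pow_sub_le_descFactorial N m).trans_eq
          (Nat.descFactorial_eq_factorial_mul_choose N m)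

/- A constant proportion of all tuple families represent a hypergraph with exactly `m` edges. -/
lemma exp_mul_pow_le_card_uniformEdgeFamily_mul (hr : 2 ≤ r) {c : ℝ} (hm : m ≤ c * n)
    (hn : 0 < n) (hrn : r ≤ n) (hcn : ((r : ℝ) ^ 2 + r.factorial * c) / n ≤ 1 / 2) :
    exp (-(2 * ((r : ℝ) ^ 2 + r.factorial * c) * c)) * ((n : ℝ) ^ r) ^ m ≤
      #(uniformEdgeFamily n r m) * (m.factorial * (r.factorial : ℝ) ^ m) := by
  have hn' : (0 : ℝ) < n := Nat.cast_pos.2 hn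
  have hc : 0 ≤ c := nonneg_of_mul_nonneg_left (m.cast_nonneg.trans hm) hn'
  set A := (r : ℝ) ^ 2 + r.factorial * c
  have choose_bound : (n : ℝ) ^ r * (1 - A / n) ≤ r.factorial * ((n.choose r : ℝ) - m) :=
    pow_mul_one_sub_div_le_factorial_mul_choose_sub hr hm hn hrn
  have loss_pos : 0 < 1 - A / n := by linarith
  have m_le_choose : m ≤ n.choose r := by
    have sub_pos : 0 < (n.choose r : ℝ) - m := pos_of_mul_pos_right
      (lt_of_lt_of_le (by positivity) choose_bound) (by positivity)
    exact_mod_cast (sub_nonneg.1 sub_pos.le)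
  rw [card_uniformEdgeFamily]
  calc exp (-(2 * A * c)) * ((n : ℝ) ^ r) ^ m
      ≤ exp (-(2 * (A / n))) ^ m * ((n : ℝ) ^ r) ^ m := by
        rw [← exp_nat_mul]
        gcongr
        calc -(2 * A * c) = -(2 * (A / n) * (c * n)) := by field_simp
          _ ≤ -(2 * (A / n) * m) := by gcongr
          _ = m * -(2 * (A / n)) := by ring
    _ ≤ (1 - A / n) ^ m * ((n : ℝ) ^ r) ^ m := by
        gcongr
        exact exp_neg_two_mul_le_one_sub (by positivity) hcn
    _ = ((n : ℝ) ^ r * (1 - A / n)) ^ m := by rw [mul_pow, mul_comm]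
    _ ≤ (r.factorial * ((n.choose r : ℝ) - m)) ^ m := by gcongr
    _ ≤ (r.factorial : ℝ) ^ m * ((n.choose r).choose m * m.factorial) := by
        rw [mul_pow]
        gcongr
        exact pow_sub_le_choose_mul_factorial m_le_choose
    _ = (n.choose r).choose m * (m.factorial * (r.factorial : ℝ) ^ m) := by ring

lemma uniformEdgeFamily_nonempty (hr : 2 ≤ r) {c : ℝ} (hm : m ≤ c * n)
    (hn : 0 < n) (hrn : r ≤ n) (hcn : ((r : ℝ) ^ 2 + r.factorial * c) / n ≤ 1 / 2) :
    (uniformEdgeFamily n r m).Nonempty := by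
  have family_large := exp_mul_pow_le_card_uniformEdgeFamily_mul hr hm hn hrn hcn
  rw [← card_pos, ← Nat.cast_pos (α := ℝ)]
  exact pos_of_mul_pos_left (lt_of_lt_of_le (by positivity) family_large) (by positivity)

lemma uniformProb_uniformEdgeFamily_le (hr : 2 ≤ r) {c : ℝ} (hm : m ≤ c * n)
    (hn : 0 < n) (hrn : r ≤ n) (hcn : ((r : ℝ) ^ 2 + r.factorial * c) / n ≤ 1 / 2)
    (B : Finset (Finset (Fin n)) → Prop) :
    uniformProb (uniformEdgeFamily n r m) B ≤
      exp (2 * ((r : ℝ) ^ 2 + r.factorial * c) * c) *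
        uniformProb univ (fun ω : Fin m → Fin r → Fin n => B (edgeSet ω)) := by
  have family_large := exp_mul_pow_le_card_uniformEdgeFamily_mul hr hm hn hrn hcn
  set M := 2 * ((r : ℝ) ^ 2 + r.factorial * c) * c
  rw [exp_neg, inv_mul_le_iff₀ (exp_pos _)] at family_large
  have family_nonempty : (0 : ℝ) < #(uniformEdgeFamily n r m) :=
    Nat.cast_pos.2 (uniformEdgeFamily_nonempty hr hm hn hrn hcn).card_pos
  rw [uniformProb_eq_card_div, uniformProb_eq_card_div, card_univ, Fintype.card_pi_const,
    Fintype.card_pi_const, Fintype.card_fin, ← mul_div_assoc,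
    div_le_div_iff₀ family_nonempty (by positivity)]
  push_cast
  calc (#{E ∈ uniformEdgeFamily n r m | B E} : ℝ) * ((n : ℝ) ^ r) ^ m
      ≤ #{E ∈ uniformEdgeFamily n r m | B E} * (exp M *
          (#(uniformEdgeFamily n r m) * (m.factorial * (r.factorial : ℝ) ^ m))) := by gcongr
    _ = exp M * ((#{E ∈ uniformEdgeFamily n r m | B E} *
          (m.factorial * r.factorial ^ m) : ℕ) : ℝ) * #(uniformEdgeFamily n r m) := by
        push_cast
        ring
    _ ≤ exp M * #{ω : Fin m → Fin r → Fin n | B (edgeSet ω)} * #(uniformEdgeFamily n r m) := by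
        gcongr
        exact card_filter_uniformEdgeFamily_mul_le B

end EdgeFamily

section ChromaticIndependence

variable {n r m : ℕ}

lemma TupleColorable.exists_properColoring {K : Type*} [Fintype K] {ω : Fin m → Fin r → Fin n}
    (hr : 0 < r) (h : TupleColorable K ω) :
    ∃ c : Fin n → Fin (Fintype.card K), ProperColoring (edgeSet ω) c := by
  obtain ⟨σ, hσ⟩ := h
  refine ⟨Fintype.equivFin K ∘ σ, fun e he => ?_⟩
  obtain ⟨i, -, rfl⟩ := mem_image.1 he
  obtain ⟨a, ha⟩ : ∃ a, σ (ω i a) ≠ σ (ω i ⟨0, hr⟩) := by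
    by_contra! h
    exact hσ i ⟨_, h⟩
  exact ⟨ω i a, mem_image_of_mem _ (mem_univ _), ω i ⟨0, hr⟩, mem_image_of_mem _ (mem_univ _),
    (Fintype.equivFin K).injective.ne ha⟩

lemma bddAbove_card_indepSet (E : Finset (Finset (Fin n))) :
    BddAbove {s : ℕ | ∃ S : Finset (Fin n), #S = s ∧ IndepSet E S} :=
  ⟨Fintype.card (Fin n), fun _ ⟨S, hS, _⟩ => hS ▸ card_le_univ S⟩

lemma independenceNumber_edgeSet_lt {ω : Fin m → Fin r → Fin n} (hr : 0 < r) {s : ℕ}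
    (h : ¬ ∃ S : Finset (Fin n), #S = s ∧ ∀ i, ¬ ∀ a, ω i a ∈ S) :
    independenceNumber (edgeSet ω) < s := by
  by_contra! hs
  have indepSet_empty : IndepSet (edgeSet ω) ∅ := by
    intro e he hsub
    obtain ⟨i, -, rfl⟩ := mem_image.1 he
    exact notMem_empty _ (hsub (mem_image_of_mem (ω i) (mem_univ ⟨0, hr⟩)))
  obtain ⟨S, card_S, indep_S⟩ : ∃ S, #S = independenceNumber (edgeSet ω) ∧
      IndepSet (edgeSet ω) S :=
    Nat.sSup_mem (s := {s : ℕ | ∃ S : Finset (Fin n), #S = s ∧ IndepSet (edgeSet ω) S})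
      ⟨0, ∅, card_empty, indepSet_empty⟩ (bddAbove_card_indepSet _)
  obtain ⟨T, hTS, card_T⟩ := exists_subset_card_eq (hs.trans_eq card_S.symm)
  refine h ⟨T, card_T, fun i hi => indep_S _ (mem_image_of_mem _ (mem_univ i)) ?_⟩
  exact image_subset_iff.2 fun a _ => hTS (hi a)

lemma le_chromaticNumber_mul_independenceNumber {k : ℕ} {E : Finset (Finset (Fin n))}
    {c₀ : Fin n → Fin k} (h₀ : ProperColoring E c₀) :
    n ≤ chromaticNumber E * independenceNumber E := by
  obtain ⟨c, hc⟩ : ∃ c : Fin n → Fin (chromaticNumber E), ProperColoring E c :=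
    Nat.sInf_mem (s := {k : ℕ | ∃ c : Fin n → Fin k, ProperColoring E c}) ⟨k, c₀, h₀⟩
  have card_colorClass_le : ∀ j, #{v | c v = j} ≤ independenceNumber E := by
    refine fun j => le_csSup (bddAbove_card_indepSet E) ⟨_, rfl, fun e he hsub => ?_⟩
    obtain ⟨v, hv, w, hw, hvw⟩ := hc e he
    exact hvw (((mem_filter.1 (hsub hv)).2).trans ((mem_filter.1 (hsub hw)).2).symm)
  calc n = #(univ : Finset (Fin n)) := (card_fin n).symm
    _ = ∑ j, #{v | c v = j} := card_eq_sum_card_fiberwise fun _ _ => mem_univ _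
    _ ≤ ∑ _j : Fin (chromaticNumber E), independenceNumber E :=
        sum_le_sum fun j _ => card_colorClass_le j
    _ = chromaticNumber E * independenceNumber E := by
        rw [sum_const, card_univ, Fintype.card_fin, smul_eq_mul]

/-- The chromatic number of `E` is at most `q`, its independence number is less than `s`, and the
two satisfy the colour class inequality. -/
def ColoringBounds (q s : ℕ) (E : Finset (Finset (Fin n))) : Prop :=
  chromaticNumber E ≤ q ∧ independenceNumber E < s ∧
    n ≤ chromaticNumber E * independenceNumber E

lemma TupleColorable.coloringBounds_edgeSet {K : Type*} [Fintype K] {ω : Fin m → Fin r → Fin n}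
    {s : ℕ} (hr : 0 < r) (hK : TupleColorable K ω)
    (hs : ¬ ∃ S : Finset (Fin n), #S = s ∧ ∀ i, ¬ ∀ a, ω i a ∈ S) :
    ColoringBounds (Fintype.card K) s (edgeSet ω) := by
  obtain ⟨c, hc⟩ := hK.exists_properColoring hr
  exact ⟨Nat.sInf_le ⟨c, hc⟩, independenceNumber_edgeSet_lt hr hs,
    le_chromaticNumber_mul_independenceNumber hc⟩

end ChromaticIndependence

lemma tendsto_uniformProb_coloringBounds {r k : ℕ} (hr : 3 ≤ r) {c c₁ β y : ℝ} (hc : 0 < c)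
    (hβ : 0 < β) (h : SecondMomentRange r k c ((1 + β) / k)) (hy : 0 < y)
    (hyc : 1 - log y < c₁ * y ^ (r - 1)) {m : ℕ → ℕ} (hm : ∀ n, (m n : ℝ) ≤ c * n)
    (hm₁ : ∀ᶠ n : ℕ in atTop, c₁ * n ≤ m n) :
    Tendsto (fun n => uniformProb (uniformEdgeFamily n r (m n)) (ColoringBounds (k + r) ⌈y * n⌉₊))
      atTop (nhds 1) := by
  have : Nonempty (Fin k) := Fin.pos_iff_nonempty.1 <| Nat.pos_of_ne_zero fun hk => by
    simpa [hk] using h.four_le_log.trans_lt' zero_lt_four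
  set A := (r : ℝ) ^ 2 + r.factorial * c
  have bad_tendsto := ((tendsto_uniformProb_not_tupleColorable_sum (K := Fin k) hr hc hβ
    (by rwa [Fintype.card_fin]) hm).add (tendsto_uniformProb_exists_forall_not_subset
      (by omega : 0 < r) hy hyc hm₁)).const_mul (exp (2 * A * c))
  rw [add_zero, mul_zero] at bad_tendsto
  have lower_tendsto := bad_tendsto.const_sub 1
  rw [sub_zero] at lower_tendsto
  refine tendsto_of_tendsto_of_tendsto_of_le_of_le' lower_tendsto tendsto_const_nhds ?_
    (Eventually.of_forall fun n => uniformProb_le_one _ _)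
  have loss_small : ∀ᶠ n : ℕ in atTop, A / n ≤ 1 / 2 :=
    (tendsto_const_div_atTop_nhds_zero_nat A).eventually_le_const (by norm_num)
  filter_upwards [eventually_gt_atTop 0, eventually_ge_atTop r, loss_small] with n hn hrn hA
  have family_nonempty := uniformEdgeFamily_nonempty (by omega) (hm n) hn hrn hA
  rw [sub_le_comm, ← uniformProb_not family_nonempty]
  refine (uniformProb_uniformEdgeFamily_le (by omega) (hm n) hn hrn hA _).trans ?_
  gcongr
  refine (uniformProb_mono fun ω _ hω => ?_).trans (uniformProb_or_le _ _ _)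
  by_contra hgood
  rw [not_or, not_not] at hgood
  have bounds := hgood.1.coloringBounds_edgeSet (by omega) hgood.2
  exact hω (by simpa only [Fintype.card_sum, Fintype.card_fin] using bounds)

section ChromaticScale

variable {r : ℕ}

/-- The asymptotic chromatic number `((r - 1) x / (r log x)) ^ (1 / (r - 1))` of random `r`-uniform
hypergraphs of average degree `x`; its inverse is the asymptotic independence ratio. -/
noncomputable def chromaticScale (r : ℕ) (x : ℝ) : ℝ :=
  (((r : ℝ) - 1) * x / (r * log x)) ^ ((1 : ℝ) / ((r : ℝ) - 1))

lemma chromaticScale_pos (hr : 2 ≤ r) {x : ℝ} (hx : 1 < x) : 0 < chromaticScale r x := by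
  have hr₁ : (0 : ℝ) < (r : ℝ) - 1 := sub_pos.2 (Nat.one_lt_cast.2 hr)
  have log_pos := log_pos hx
  rw [chromaticScale]
  positivity

lemma chromaticScale_pow (hr : 2 ≤ r) {x : ℝ} (hx : 1 < x) :
    chromaticScale r x ^ (r - 1) = ((r : ℝ) - 1) * x / (r * log x) := by
  have hr₁ : (0 : ℝ) < (r : ℝ) - 1 := sub_pos.2 (Nat.one_lt_cast.2 hr)
  have log_pos := log_pos hx
  rw [chromaticScale, one_div, ← Nat.cast_pred (by omega : 0 < r)]
  exact rpow_inv_natCast_pow (by rw [Nat.cast_pred (by omega)]; positivity) (by omega)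

lemma inv_chromaticScale (hr : 1 ≤ r) {x : ℝ} (hx : 1 ≤ x) :
    (chromaticScale r x)⁻¹ =
      (r * log x / (((r : ℝ) - 1) * x)) ^ ((1 : ℝ) / ((r : ℝ) - 1)) := by
  have hr₁ : (0 : ℝ) ≤ (r : ℝ) - 1 := sub_nonneg.2 (Nat.one_le_cast.2 hr)
  have log_nonneg := log_nonneg hx
  rw [chromaticScale, ← inv_rpow (by positivity), inv_div]

lemma monotoneOn_chromaticScale (hr : 2 ≤ r) :
    MonotoneOn (chromaticScale r) {x | exp 1 ≤ x} := by
  intro x hx y hy hxy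
  have hr₁ : (0 : ℝ) < (r : ℝ) - 1 := sub_pos.2 (Nat.one_lt_cast.2 hr)
  have one_lt_x : 1 < x := (one_lt_exp_iff.2 one_pos).trans_le hx
  have one_lt_y := one_lt_x.trans_le hxy
  have log_x_pos := log_pos one_lt_x
  have log_y_pos := log_pos one_lt_y
  have log_div_le := log_div_self_antitoneOn hx hy hxy
  dsimp only at log_div_le
  rw [div_le_div_iff₀ (by positivity) (by positivity)] at log_div_le
  refine rpow_le_rpow (by positivity) ?_ (by positivity)
  rw [div_le_div_iff₀ (by positivity) (by positivity)]
  calc ((r : ℝ) - 1) * x * (r * log y) = (r - 1) * r * (log y * x) := by ring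
    _ ≤ (r - 1) * r * (log x * y) := by gcongr
    _ = (r - 1) * y * (r * log x) := by ring

lemma mul_chromaticScale_le (hr : 2 ≤ r) {t x y : ℝ} (ht₀ : 0 ≤ t) (ht₁ : t ≤ 1) (hx : 1 < x)
    (htx : t * y ≤ x) (hxy : x ≤ y) : t * chromaticScale r y ≤ chromaticScale r x := by
  have hr₁ : (0 : ℝ) < (r : ℝ) - 1 := sub_pos.2 (Nat.one_lt_cast.2 hr)
  have log_x_pos := log_pos hx
  have y_pos : 0 < y := by linarith
  refine le_of_pow_le_pow_left₀ (by omega : r - 1 ≠ 0) (chromaticScale_pos hr hx).le ?_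
  have log_y_pos := log_pos (hx.trans_le hxy)
  calc (t * chromaticScale r y) ^ (r - 1)
      = t ^ (r - 1) * (((r : ℝ) - 1) * y / (r * log y)) := by
        rw [mul_pow, chromaticScale_pow hr (hx.trans_le hxy)]
    _ ≤ t * ((r - 1) * y / (r * log y)) := by
        gcongr
        exact pow_le_of_le_one ht₀ ht₁ (by omega)
    _ = (r - 1) * (t * y) / (r * log y) := by ring
    _ ≤ (r - 1) * x / (r * log x) := by gcongr
    _ = chromaticScale r x ^ (r - 1) := (chromaticScale_pow hr hx).symm

lemma div_mul_div_chromaticScale_pow (hr : 2 ≤ r) {x : ℝ} (hx : 1 < x) (s : ℝ) :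
    x / r * (s / chromaticScale r x) ^ (r - 1) = s ^ (r - 1) / ((r : ℝ) - 1) * log x := by
  have hr₁ : (0 : ℝ) < (r : ℝ) - 1 := sub_pos.2 (Nat.one_lt_cast.2 hr)
  have log_pos := log_pos hx
  rw [div_pow, chromaticScale_pow hr hx]
  field_simp

lemma tendsto_log_chromaticScale_div_log (hr : 2 ≤ r) :
    Tendsto (fun x => log (chromaticScale r x) / log x) atTop (nhds (1 / ((r : ℝ) - 1))) := by
  have hr₁ : (0 : ℝ) < (r : ℝ) - 1 := sub_pos.2 (Nat.one_lt_cast.2 hr)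
  have log_log_tendsto : Tendsto (fun x => log (log x) / log x) atTop (nhds 0) :=
    isLittleO_log_id_atTop.tendsto_div_nhds_zero.comp tendsto_log_atTop
  have const_tendsto : Tendsto (fun x => log (((r : ℝ) - 1) / r) / log x) atTop (nhds 0) :=
    tendsto_log_atTop.const_div_atTop _
  have expansion_tendsto :=
    ((const_tendsto.add_const 1).sub log_log_tendsto).const_mul (1 / ((r : ℝ) - 1))
  rw [zero_add, sub_zero, mul_one] at expansion_tendsto
  refine expansion_tendsto.congr' ?_
  filter_upwards [eventually_gt_atTop 1] with x hx
  have log_pos := log_pos hx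
  rw [chromaticScale, log_rpow (by positivity), mul_div_mul_comm, log_mul (by positivity)
    (by positivity), log_div (by positivity) log_pos.ne']
  field_simp
  ring

lemma tendsto_log_chromaticScale (hr : 2 ≤ r) :
    Tendsto (fun x => log (chromaticScale r x)) atTop atTop := by
  have hr₁ : (0 : ℝ) < (r : ℝ) - 1 := sub_pos.2 (Nat.one_lt_cast.2 hr)
  refine ((tendsto_log_chromaticScale_div_log hr).pos_mul_atTop (by positivity)
    tendsto_log_atTop).congr' ?_
  filter_upwards [eventually_gt_atTop 1] with x hx
  exact div_mul_cancel₀ _ (log_pos hx).ne'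

lemma tendsto_chromaticScale (hr : 2 ≤ r) : Tendsto (chromaticScale r) atTop atTop := by
  refine tendsto_atTop_mono' atTop ?_ (tendsto_log_chromaticScale hr)
  filter_upwards [eventually_gt_atTop 1] with x hx
  exact log_le_self (chromaticScale_pos hr hx).le

lemma tendsto_ceil_mul_chromaticScale_div (hr : 2 ≤ r) {s : ℝ} (hs : 0 ≤ s) :
    Tendsto (fun x => (⌈s * chromaticScale r x⌉₊ : ℝ) / chromaticScale r x) atTop (nhds s) :=
  (tendsto_nat_ceil_mul_div_atTop hs).comp (tendsto_chromaticScale hr)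

lemma tendsto_ceil_mul_chromaticScale (hr : 2 ≤ r) {s : ℝ} (hs : 0 < s) :
    Tendsto (fun x => (⌈s * chromaticScale r x⌉₊ : ℝ)) atTop atTop :=
  tendsto_atTop_mono (fun _ => Nat.le_ceil _) ((tendsto_chromaticScale hr).const_mul_atTop hs)

lemma tendsto_log_ceil_mul_chromaticScale_div_log (hr : 2 ≤ r) {s : ℝ} (hs : 0 < s) :
    Tendsto (fun x => log ⌈s * chromaticScale r x⌉₊ / log x) atTop (nhds (1 / ((r : ℝ) - 1))) := by
  have log_ratio_tendsto := ((tendsto_ceil_mul_chromaticScale_div hr hs.le).log hs.ne').div_atTop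
    tendsto_log_atTop
  have sum_tendsto := log_ratio_tendsto.add (tendsto_log_chromaticScale_div_log hr)
  rw [zero_add] at sum_tendsto
  refine sum_tendsto.congr' ?_
  filter_upwards [eventually_gt_atTop 1] with x hx
  have scale_pos := chromaticScale_pos hr hx
  have ceil_pos : (0 : ℝ) < ⌈s * chromaticScale r x⌉₊ :=
    Nat.cast_pos.2 (Nat.ceil_pos.2 (by positivity))
  rw [← add_div, log_div ceil_pos.ne' scale_pos.ne', sub_add_cancel]

lemma tendsto_density_div_log (hr : 2 ≤ r) {s b : ℝ} (hs : 0 < s) :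
    Tendsto (fun x => x / r * (b / ⌈s * chromaticScale r x⌉₊) ^ (r - 1) /
      (1 - (b / ⌈s * chromaticScale r x⌉₊) ^ (r - 1)) ^ 2 / log x) atTop
      (nhds ((b / s) ^ (r - 1) / ((r : ℝ) - 1))) := by
  have pow_tendsto := ((tendsto_ceil_mul_chromaticScale hr hs).const_div_atTop b).pow (r - 1)
  rw [zero_pow (by omega)] at pow_tendsto
  have ratio_tendsto := (((tendsto_const_nhds (x := b)).div
    (tendsto_ceil_mul_chromaticScale_div hr hs.le) hs.ne').pow (r - 1)).div_const ((r : ℝ) - 1)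
  have quotient_tendsto := ratio_tendsto.div ((pow_tendsto.const_sub 1).pow 2) (by norm_num)
  rw [sub_zero, one_pow, div_one] at quotient_tendsto
  refine quotient_tendsto.congr' ?_
  filter_upwards [eventually_gt_atTop 1] with x hx
  have scale_pos := chromaticScale_pos hr hx
  have log_pos := log_pos hx
  have numerator := div_mul_div_chromaticScale_pow hr hx
    (b / (⌈s * chromaticScale r x⌉₊ / chromaticScale r x))
  rw [div_div, div_mul_cancel₀ _ scale_pos.ne'] at numerator
  rw [numerator, div_right_comm (_ * log x), mul_div_cancel_right₀ _ log_pos.ne']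
  rfl

/- The critical density `log k` exceeds that of `k = ⌈s X⌉` colour classes of proportion `b / k` by
the factor `(s / b) ^ (r - 1)`. -/
lemma eventually_secondMomentRange_ceil (hr : 2 ≤ r) {s b : ℝ} (hb : 0 ≤ b) (hbs : b < s) :
    ∀ᶠ x : ℝ in atTop, SecondMomentRange r ⌈s * chromaticScale r x⌉₊ (x / r)
      (b / ⌈s * chromaticScale r x⌉₊) := by
  have hr₁ : (0 : ℝ) < (r : ℝ) - 1 := sub_pos.2 (Nat.one_lt_cast.2 hr)
  have hs : 0 < s := hb.trans_lt hbs
  have ceil_tendsto := tendsto_ceil_mul_chromaticScale hr hs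
  have pow_tendsto := (ceil_tendsto.const_div_atTop b).pow (r - 1)
  rw [zero_pow (by omega)] at pow_tendsto
  have log_small : ∀ᶠ y : ℝ in atTop, 8 * (r : ℝ) ^ 2 * log y ≤ y := by
    filter_upwards [isLittleO_log_id_atTop.bound (c := (8 * (r : ℝ) ^ 2)⁻¹) (by positivity),
      eventually_ge_atTop 0] with y hy hy₀
    rw [id, norm_of_nonneg hy₀, inv_mul_eq_div, le_div_iff₀' (by positivity)] at hy
    exact (mul_le_mul_of_nonneg_left (le_abs_self _) (by positivity)).trans hy
  have log_sub_tendsto := (tendsto_log_ceil_mul_chromaticScale_div_log hr hs).sub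
    (tendsto_log_atTop.const_div_atTop 2)
  rw [sub_zero] at log_sub_tendsto
  have limit_lt : (b / s) ^ (r - 1) / ((r : ℝ) - 1) < 1 / (r - 1) := by
    gcongr
    exact pow_lt_one₀ (by positivity) ((div_lt_one hs).2 hbs) (by omega)
  filter_upwards [eventually_gt_atTop 1,
    (tendsto_log_atTop.comp ceil_tendsto).eventually_ge_atTop 4, ceil_tendsto.eventually log_small,
    pow_tendsto.eventually_lt_const one_pos,
    (tendsto_density_div_log hr hs).eventually_lt log_sub_tendsto limit_lt]
    with x hx four_le_log log_le pow_lt_one density_lt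
  rw [← sub_div, div_lt_div_iff_of_pos_right (log_pos hx)] at density_lt
  exact ⟨four_le_log, log_le, pow_lt_one, density_lt.le⟩

lemma eventually_ceil_mul_chromaticScale_add_le (hr : 2 ≤ r) {s t : ℝ} (hs : 0 ≤ s) (hst : s < t)
    (b : ℝ) : ∀ᶠ x in atTop, ⌈s * chromaticScale r x⌉₊ + b ≤ t * chromaticScale r x := by
  have ratio_tendsto := (tendsto_ceil_mul_chromaticScale_div hr hs).add
    ((tendsto_chromaticScale hr).const_div_atTop b)
  rw [add_zero] at ratio_tendsto
  filter_upwards [eventually_gt_atTop 1, ratio_tendsto.eventually_le_const hst] with x hx hle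
  rwa [← add_div, div_le_iff₀ (chromaticScale_pos hr hx)] at hle

lemma eventually_one_sub_log_div_chromaticScale_lt (hr : 2 ≤ r) {s t : ℝ} (hs : 0 < s)
    (hst : 1 < t * s ^ (r - 1)) :
    ∀ᶠ x in atTop, 1 - log (s / chromaticScale r x) <
      t * (x / r) * (s / chromaticScale r x) ^ (r - 1) := by
  have hr₁ : (0 : ℝ) < (r : ℝ) - 1 := sub_pos.2 (Nat.one_lt_cast.2 hr)
  have ratio_tendsto := (tendsto_log_atTop.const_div_atTop (1 - log s)).add
    (tendsto_log_chromaticScale_div_log hr)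
  rw [zero_add] at ratio_tendsto
  have limit_lt : 1 / ((r : ℝ) - 1) < t * s ^ (r - 1) / ((r : ℝ) - 1) := by gcongr
  filter_upwards [eventually_gt_atTop 1, ratio_tendsto.eventually_lt_const limit_lt] with x hx hlt
  rw [← add_div, div_lt_iff₀ (log_pos hx)] at hlt
  rw [mul_assoc, div_mul_div_chromaticScale_pow hr hx,
    log_div hs.ne' (chromaticScale_pos hr hx).ne', sub_sub_eq_add_sub, ← mul_assoc,
    ← mul_div_assoc, add_sub_right_comm]
  exact hlt

end ChromaticScale

section EdgeCount

variable {r d : ℕ}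

lemma mFun_le (n : ℕ) : (mFun r d n : ℝ) ≤ d / r * n := by
  have arg_le : ((d : ℝ) - (d : ℝ) ^ ((1 : ℝ) / 2) * log d) * n / r ≤ d / r * n := by
    rw [div_mul_eq_mul_div]
    gcongr
    exact sub_le_self _ (mul_nonneg (by positivity) (log_natCast_nonneg d))
  exact (Nat.cast_le.2 (Nat.floor_mono arg_le)).trans (Nat.floor_le (by positivity))

lemma DFun_le (hr : 0 < r) {n : ℕ} (hn : 0 < n) : DFun r d n ≤ d := by
  rw [DFun, div_le_iff₀ (Nat.cast_pos.2 hn)]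
  calc (r : ℝ) * mFun r d n ≤ r * (d / r * n) := by
        gcongr
        exact mFun_le n
    _ = d * n := by field_simp

lemma eventually_rpow_half_mul_log_lt {η : ℝ} (hη : 0 < η) :
    ∀ᶠ x : ℝ in atTop, x ^ ((1 : ℝ) / 2) * log x < η * x := by
  have ratio_tendsto := (isLittleO_log_rpow_atTop (r := 1 / 2) (by norm_num)).tendsto_div_nhds_zero
  filter_upwards [eventually_gt_atTop 0, ratio_tendsto.eventually_lt_const hη] with x hx hlt
  rw [div_lt_iff₀ (by positivity)] at hlt
  calc x ^ ((1 : ℝ) / 2) * log x < x ^ ((1 : ℝ) / 2) * (η * x ^ ((1 : ℝ) / 2)) := by gcongr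
    _ = η * x := by rw [mul_left_comm, ← rpow_add hx, add_halves, rpow_one]

lemma eventually_mul_le_mFun_sub_log {t : ℝ} (hr : 0 < r) (ht : 0 ≤ t)
    (htd : (d : ℝ) ^ ((1 : ℝ) / 2) * log d < (1 - t) * d) :
    ∀ᶠ n : ℕ in atTop, t * (d / r) * n ≤ mFun r d n - log n := by
  have : (0 : ℝ) < r := Nat.cast_pos.2 hr
  set A : ℝ := (d - (d : ℝ) ^ ((1 : ℝ) / 2) * log d) / r with hA
  have td_lt : t * (d / r) < A := by
    rw [hA, ← mul_div_assoc]
    gcongr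
    linarith
  have A_nonneg : 0 ≤ A := le_trans (by positivity) td_lt.le
  have ratio_tendsto := ((tendsto_nat_floor_mul_div_atTop A_nonneg).sub
    isLittleO_log_id_atTop.tendsto_div_nhds_zero).comp tendsto_natCast_atTop_atTop
  rw [sub_zero] at ratio_tendsto
  filter_upwards [eventually_gt_atTop 0, ratio_tendsto.eventually_const_le td_lt] with n hn hle
  rwa [Function.comp_apply, id, ← sub_div, le_div_iff₀ (Nat.cast_pos.2 hn), hA,
    div_mul_eq_mul_div _ (r : ℝ)] at hle

lemma le_DFun {t : ℝ} (hr : 0 < r) {n : ℕ} (hn : 0 < n) (h : t * (d / r) * n ≤ mFun r d n) :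
    t * d ≤ DFun r d n := by
  rw [DFun, le_div_iff₀ (Nat.cast_pos.2 hn)]
  calc t * d * n = r * (t * (d / r) * n) := by field_simp
    _ ≤ r * mFun r d n := by gcongr

end EdgeCount

section RelativeErrors

variable {η χ α X Z n : ℝ}

lemma abs_chromatic_sub_le (hη : 0 ≤ η) (hX : 0 < X) (hn : 0 < n) (hχ : 0 ≤ χ)
    (hχX : χ ≤ (1 + 2 * η) * X) (hαX : α ≤ (1 + 3 * η) / X * n) (hχα : n ≤ χ * α) :
    |χ - X| ≤ 3 * η * X := by
  have X_le : X ≤ (1 + 3 * η) * χ := by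
    refine le_of_mul_le_mul_right ?_ hn
    calc X * n ≤ X * (χ * ((1 + 3 * η) / X * n)) := by
          gcongr
          exact hχα.trans (by gcongr)
      _ = (1 + 3 * η) * χ * n := by field_simp
  rw [abs_sub_le_iff]
  constructor <;> nlinarith

lemma abs_independence_sub_le (hη : 0 ≤ η) (hη₁ : η ≤ 1) (hZ : 0 < Z) (hn : 0 < n)
    (hα : 0 ≤ α) (hχX : χ ≤ (1 + 2 * η) * X) (hαX : α ≤ (1 + 3 * η) / X * n) (hχα : n ≤ χ * α)
    (hZX : Z ≤ X) (hXZ : (1 - η) * X ≤ Z) :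
    |α - Z⁻¹ * n| ≤ 3 * η * (Z⁻¹ * n) := by
  have upper : α ≤ (1 + 3 * η) * (Z⁻¹ * n) := by
    calc α ≤ (1 + 3 * η) / X * n := hαX
      _ ≤ (1 + 3 * η) / Z * n := by gcongr
      _ = (1 + 3 * η) * (Z⁻¹ * n) := by rw [div_eq_mul_inv, mul_assoc]
  have lower : (1 - 3 * η) * (Z⁻¹ * n) ≤ α := by
    have n_le : n ≤ (1 + 2 * η) * X * α := hχα.trans (by gcongr)
    have : 0 ≤ 1 - η := sub_nonneg.2 hη₁
    rw [inv_mul_eq_div, ← mul_div_assoc, div_le_iff₀ hZ]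
    refine le_of_mul_le_mul_left ?_ (show 0 < 1 + 2 * η by positivity)
    calc (1 + 2 * η) * ((1 - 3 * η) * n) = (1 - η - 6 * η ^ 2) * n := by ring
      _ ≤ (1 - η) * n := mul_le_mul_of_nonneg_right (sub_le_self _ (by positivity)) hn.le
      _ ≤ (1 - η) * ((1 + 2 * η) * X * α) := by gcongr
      _ = (1 + 2 * η) * (α * ((1 - η) * X)) := by ring
      _ ≤ (1 + 2 * η) * (α * Z) := by gcongr
  rw [abs_sub_le_iff]
  constructor <;> linarith

end RelativeErrors

lemma ColoringBounds.abs_sub_le {n q : ℕ} {E : Finset (Finset (Fin n))} {η X Z : ℝ}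
    (h : ColoringBounds q ⌈(1 + 3 * η) / X * n⌉₊ E) (hη : 0 ≤ η) (hη₁ : η ≤ 1) (hn : 0 < n)
    (hZ : 0 < Z) (hZX : Z ≤ X) (hXZ : (1 - η) * X ≤ Z) (hq : q ≤ (1 + 2 * η) * X) :
    |(chromaticNumber E : ℝ) - X| ≤ 3 * η * X ∧
      |(independenceNumber E : ℝ) - Z⁻¹ * n| ≤ 3 * η * (Z⁻¹ * n) := by
  obtain ⟨chromatic_le, independence_lt, le_mul⟩ := h
  have hn' : (0 : ℝ) < n := Nat.cast_pos.2 hn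
  have χ_le : (chromaticNumber E : ℝ) ≤ (1 + 2 * η) * X := (Nat.cast_le.2 chromatic_le).trans hq
  have α_le : (independenceNumber E : ℝ) ≤ (1 + 3 * η) / X * n :=
    (Nat.lt_ceil.1 independence_lt).le
  have n_le : (n : ℝ) ≤ chromaticNumber E * independenceNumber E := by exact_mod_cast le_mul
  exact ⟨abs_chromatic_sub_le hη (hZ.trans_le hZX) hn' (Nat.cast_nonneg _) χ_le α_le n_le,
    abs_independence_sub_le hη hη₁ hZ hn' (Nat.cast_nonneg _) χ_le α_le n_le hZX hXZ⟩

lemma eventually_tendsto_uniformProb_coloringBounds {r : ℕ} (hr : 3 ≤ r) {η : ℝ} (hη : 0 < η)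
    (hη₁ : η ≤ 1 / 2) :
    ∀ᶠ d : ℕ in atTop, ∀ m : ℕ → ℕ,
      (∀ n, (mFun r d n : ℝ) - log n ≤ m n ∧ m n ≤ mFun r d n) →
      Tendsto (fun n => uniformProb (uniformEdgeFamily n r (m n))
        (ColoringBounds (⌈(1 + η) * chromaticScale r d⌉₊ + r)
          ⌈(1 + 3 * η) / chromaticScale r d * n⌉₊)) atTop (nhds 1) := by
  have one_lt : 1 < (1 - η) * (1 + 3 * η) ^ (r - 1) := by
    calc 1 < (1 - η) * (1 + 3 * η) := by nlinarith
      _ ≤ (1 - η) * (1 + 3 * η) ^ (r - 1) := by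
          gcongr
          · linarith
          · exact le_self_pow₀ (by linarith) (by omega)
  filter_upwards [tendsto_natCast_atTop_atTop.eventually_gt_atTop (1 : ℝ),
    tendsto_natCast_atTop_atTop.eventually (eventually_rpow_half_mul_log_lt hη),
    tendsto_natCast_atTop_atTop.eventually (eventually_secondMomentRange_ceil (s := 1 + η)
      (b := 1 + η / 2) (by omega : 2 ≤ r) (by positivity) (by linarith)),
    tendsto_natCast_atTop_atTop.eventually (eventually_one_sub_log_div_chromaticScale_lt
      (by omega : 2 ≤ r) (by positivity) one_lt)]
    with d one_lt_d log_lt secondMoment firstMoment m hm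
  have scale_pos := chromaticScale_pos (by omega : 2 ≤ r) one_lt_d
  refine tendsto_uniformProb_coloringBounds hr (by positivity) (half_pos hη) secondMoment
    (by positivity) firstMoment (fun n => (Nat.cast_le.2 (hm n).2).trans (mFun_le n)) ?_
  exact (eventually_mul_le_mFun_sub_log (by omega) (by linarith)
    (by rwa [sub_sub_cancel])).mono fun n hn => hn.trans (hm n).1

lemma eventually_chromaticScale_DFun {r : ℕ} (hr : 2 ≤ r) {η : ℝ} (hη : 0 < η) (hη₁ : η < 1) :
    ∀ᶠ d : ℕ in atTop, ∀ᶠ n : ℕ in atTop, 1 < DFun r d n ∧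
      chromaticScale r (DFun r d n) ≤ chromaticScale r d ∧
      (1 - η) * chromaticScale r d ≤ chromaticScale r (DFun r d n) := by
  filter_upwards [tendsto_natCast_atTop_atTop.eventually_ge_atTop (exp 1 / (1 - η)),
    tendsto_natCast_atTop_atTop.eventually (eventually_rpow_half_mul_log_lt hη)]
    with d exp_le log_lt
  rw [div_le_iff₀' (by linarith)] at exp_le
  filter_upwards [eventually_gt_atTop 0, eventually_mul_le_mFun_sub_log (by omega : 0 < r)
    (by linarith : 0 ≤ 1 - η) (by rwa [sub_sub_cancel])] with n hn hle
  have mul_le_DFun : (1 - η) * d ≤ DFun r d n :=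
    le_DFun (by omega) hn (hle.trans (sub_le_self _ (log_natCast_nonneg n)))
  have DFun_le_d : DFun r d n ≤ d := DFun_le (by omega) hn
  have exp_le_DFun : exp 1 ≤ DFun r d n := exp_le.trans mul_le_DFun
  have one_lt_DFun : 1 < DFun r d n := (one_lt_exp_iff.2 one_pos).trans_le exp_le_DFun
  exact ⟨one_lt_DFun,
    monotoneOn_chromaticScale hr exp_le_DFun (exp_le_DFun.trans DFun_le_d) DFun_le_d,
    mul_chromaticScale_le hr (by linarith) (by linarith) one_lt_DFun mul_le_DFun DFun_le_d⟩

/-- For every `r ≥ 3` and `ε > 0` there is `d₀` such that for every fixed integer `d ≥ d₀`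
and every sequence `m′(n)` of integers with `m(n) − log n ≤ m′(n) ≤ m(n)`, w.h.p.
the uniform random `r`-uniform hypergraph with exactly `m′(n)` edges satisfies both
`|χ − X| ≤ (ε/2)X` and `|α − Y·n| ≤ (ε/2)·Y·n`, where
`X = ((r−1)d/(r log d))^(1/(r−1))` and `Y = (r log D/((r−1)D))^(1/(r−1))`, `D = r·m(n)/n`. -/
theorem chromatic_and_independence_of_uniform_edge_model
    (r : ℕ) (hr : 3 ≤ r) (ε : ℝ) (hε : 0 < ε) :
    ∃ d₀ : ℕ, ∀ d : ℕ, d₀ ≤ d →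
      ∀ m' : ℕ → ℕ,
        (∀ n : ℕ, (mFun r d n : ℝ) - Real.log n ≤ m' n ∧ m' n ≤ mFun r d n) →
        Filter.Tendsto
          (fun n : ℕ =>
            uniformProb (uniformEdgeFamily n r (m' n))
              (fun E =>
                |(chromaticNumber E : ℝ) -
                    ((((r : ℝ) - 1) * d / (r * Real.log d)) ^ ((1 : ℝ) / ((r : ℝ) - 1)))| ≤
                  ε / 2 * ((((r : ℝ) - 1) * d / (r * Real.log d)) ^ ((1 : ℝ) / ((r : ℝ) - 1))) ∧
                |(independenceNumber E : ℝ) -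
                    ((r * Real.log (DFun r d n) / (((r : ℝ) - 1) * DFun r d n)) ^
                        ((1 : ℝ) / ((r : ℝ) - 1))) * n| ≤
                  ε / 2 * (((r * Real.log (DFun r d n) / (((r : ℝ) - 1) * DFun r d n)) ^
                      ((1 : ℝ) / ((r : ℝ) - 1))) * n)))
          Filter.atTop (nhds 1) := by
  obtain ⟨η, hη, hηε, hη₁⟩ : ∃ η : ℝ, 0 < η ∧ 3 * η ≤ ε / 2 ∧ η ≤ 1 / 2 :=
    ⟨min (ε / 6) (1 / 2), by positivity, by linarith [min_le_left (ε / 6) (1 / 2)],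
      min_le_right _ _⟩
  refine eventually_atTop.1 ?_
  filter_upwards [eventually_tendsto_uniformProb_coloringBounds hr hη hη₁,
    eventually_chromaticScale_DFun (by omega : 2 ≤ r) hη (by linarith),
    tendsto_natCast_atTop_atTop.eventually (eventually_ceil_mul_chromaticScale_add_le
      (by omega : 2 ≤ r) (by positivity) (by linarith : 1 + η < 1 + 2 * η) r)]
    with d bounds_tendsto scale_DFun colors_le m' hm'
  refine tendsto_of_tendsto_of_tendsto_of_le_of_le' (bounds_tendsto m' hm') tendsto_const_nhds ?_
    (Eventually.of_forall fun n => uniformProb_le_one _ _)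
  filter_upwards [scale_DFun, eventually_gt_atTop 0] with n ⟨one_lt_D, scale_le, le_scale⟩ hn
  have scale_pos := chromaticScale_pos (by omega : 2 ≤ r) one_lt_D
  refine uniformProb_mono fun E _ bounds => ?_
  obtain ⟨chromatic_error, independence_error⟩ := bounds.abs_sub_le hη.le (by linarith) hn
    scale_pos scale_le le_scale (by exact_mod_cast colors_le)
  rw [← inv_chromaticScale (by omega) one_lt_D.le]
  exact ⟨chromatic_error.trans (mul_le_mul_of_nonneg_right hηε (scale_pos.le.trans scale_le)),
    independence_error.trans (by gcongr)⟩
end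

section
/- For every integer r ≥ 3 and every ε > 0 there exists d₀ = d₀(r, ε) such that for every real d ≥ d₀ and every integer j with 1 ≤ j ≤ r−1 the following holds. Set a := (1 + ε/2)·(r log d/((r−1)d))^{1/(r−1)}, κ_j := (10d/r)·C(r,j)·a^j, and p = p(n) := d(r−1)!/n^{r−1}. Then n · Σ_{s=1}^{⌊an⌋} C(n,s)·(1−p)^{C(s,r)}·C( C(s,j)·C(n,r−j), ⌈κ_j n⌉ )·p^{⌈κ_j n⌉} → 0 as n → ∞. -/
open Finset Filter Real

/-! The edge factor `C(M, K) p ^ K`, with `M = C(s, j) C(n, r - j)` and `K = ⌈κ n⌉`, beats the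
crude bounds `C(n, s) ≤ 2 ^ n` and `(1 - p) ^ C(s, r) ≤ 1` on the other two. For `s ≤ a n` the mean
`M p` is at most `κ n / 10 ≤ K / 10`, so `C(M, K) p ^ K ≤ (M p) ^ K / K! ≤ (e / 10) ^ K`. Moreover
`κ` tends to infinity with `d`: either `a ≥ 1` and `κ ≥ 10 d / r`, or `a ^ j ≥ a ^ (r - 1)`, which
is at least of order `log d / d`. Once `κ ≥ 1` we have `K ≥ n`, and the whole expression is at most
`a n ^ 2 (2 e / 10) ^ n`. -/

/-- The edge probability `p(n)` of the binomial random `r`-uniform hypergraph on `n` vertices with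
average degree about `d`. -/
noncomputable def edgeProb (r : ℕ) (d : ℝ) (n : ℕ) : ℝ :=
  d * ((r - 1).factorial : ℝ) / (n : ℝ) ^ (r - 1)

/-- The asymptotic expected number, divided by `n`, of edges meeting a set of `a * n` vertices in
exactly `j` vertices. The paper's `κ_j` is ten times this number. -/
noncomputable def crossDensity (r j : ℕ) (d a : ℝ) : ℝ :=
  d / r * (r.choose j : ℝ) * a ^ j

/-- The paper's `a`, the size of the vertex sets relative to `n`, with `c` for `1 + ε / 2`. -/
noncomputable def relativeSize (r : ℕ) (c d : ℝ) : ℝ :=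
  c * (r * Real.log d / (((r : ℝ) - 1) * d)) ^ ((1 : ℝ) / ((r : ℝ) - 1))

/-- The union bound, over all `s`-sets of vertices, for such a set to be independent and to have
`⌈κ n⌉` edges among the `C(s, j) C(n, r - j)` candidates for meeting it in `j` vertices. -/
noncomputable def unionBound (r j : ℕ) (κ p : ℝ) (n s : ℕ) : ℝ :=
  (n.choose s : ℝ) * (1 - p) ^ (s.choose r) *
    (((s.choose j * n.choose (r - j)).choose ⌈κ * n⌉₊ : ℝ) * p ^ ⌈κ * n⌉₊)

section Binomial

lemma choose_mul_pow_le_exp_mul_pow {M K : ℕ} {p t : ℝ} (hp : 0 ≤ p) (ht : 0 ≤ t)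
    (h : M * p ≤ t * K) : (M.choose K : ℝ) * p ^ K ≤ (exp 1 * t) ^ K :=
  calc (M.choose K : ℝ) * p ^ K
      ≤ (M : ℝ) ^ K / K.factorial * p ^ K := by gcongr; exact Nat.choose_le_pow_div K M
    _ = (M * p) ^ K / K.factorial := by rw [mul_pow]; ring
    _ ≤ (t * K) ^ K / K.factorial := by gcongr
    _ = (K : ℝ) ^ K / K.factorial * t ^ K := by rw [mul_pow]; ring
    _ ≤ exp K * t ^ K := by
      gcongr
      exact pow_div_factorial_le_exp _ K.cast_nonneg K
    _ = (exp 1 * t) ^ K := by rw [mul_pow, exp_one_pow]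

lemma choose_mul_choose_le_choose_mul_pow_div (s n j k : ℕ) :
    (s.choose j : ℝ) * n.choose k ≤
      (j + k).choose j * ((s : ℝ) ^ j * (n : ℝ) ^ k) / (j + k).factorial :=
  calc (s.choose j : ℝ) * n.choose k
      ≤ (s : ℝ) ^ j / j.factorial * ((n : ℝ) ^ k / k.factorial) := by
        gcongr <;> exact Nat.choose_le_pow_div _ _
    _ = (j + k).choose j * ((s : ℝ) ^ j * (n : ℝ) ^ k) / (j + k).factorial := by
        rw [Nat.cast_add_choose]
        field_simp

end Binomial

section EdgeProb

variable {r j n s : ℕ} {d a : ℝ}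

lemma edgeProb_nonneg (hd : 0 ≤ d) (r n : ℕ) : 0 ≤ edgeProb r d n := by
  unfold edgeProb
  positivity

lemma tendsto_edgeProb_zero (hr : 2 ≤ r) (d : ℝ) : Tendsto (edgeProb r d) atTop (nhds 0) :=
  tendsto_const_nhds.div_atTop
    ((tendsto_pow_atTop (by omega)).comp tendsto_natCast_atTop_atTop)

lemma pow_mul_edgeProb (hr : 0 < r) (hn : 0 < n) (d : ℝ) :
    (n : ℝ) ^ r * edgeProb r d n = r.factorial * (d / r * n) := by
  obtain ⟨k, rfl⟩ := Nat.exists_eq_add_one.2 hr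
  simp only [edgeProb, Nat.add_sub_cancel, Nat.factorial_succ, Nat.cast_mul]
  field_simp
  ring

lemma choose_mul_choose_mul_edgeProb_le (hr : 0 < r) (hj : j ≤ r) (hn : 0 < n) (hd : 0 ≤ d)
    (hs : (s : ℝ) ≤ a * n) :
    (s.choose j : ℝ) * n.choose (r - j) * edgeProb r d n ≤ crossDensity r j d a * n := by
  have hp := edgeProb_nonneg hd r n
  have hchoose := choose_mul_choose_le_choose_mul_pow_div s n j (r - j)
  rw [Nat.add_sub_cancel' hj] at hchoose
  calc (s.choose j : ℝ) * n.choose (r - j) * edgeProb r d n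
      ≤ r.choose j * ((s : ℝ) ^ j * (n : ℝ) ^ (r - j)) / r.factorial * edgeProb r d n := by gcongr
    _ ≤ r.choose j * ((a * n) ^ j * (n : ℝ) ^ (r - j)) / r.factorial * edgeProb r d n := by gcongr
    _ = r.choose j * a ^ j / r.factorial * ((n : ℝ) ^ r * edgeProb r d n) := by
      rw [← pow_mul_pow_sub _ hj, mul_pow]
      ring
    _ = crossDensity r j d a * n := by
      rw [pow_mul_edgeProb hr hn, crossDensity]
      field_simp

end EdgeProb

lemma sum_Icc_floor_le {f : ℕ → ℝ} {x b : ℝ} (hx : 0 ≤ x) (hb : 0 ≤ b)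
    (h : ∀ s : ℕ, (s : ℝ) ≤ x → f s ≤ b) : ∑ s ∈ Icc 1 ⌊x⌋₊, f s ≤ x * b :=
  calc ∑ s ∈ Icc 1 ⌊x⌋₊, f s
      ≤ #(Icc 1 ⌊x⌋₊) • b :=
        sum_le_card_nsmul _ _ _ fun s hs => h s ((Nat.le_floor_iff hx).1 (mem_Icc.1 hs).2)
    _ = ⌊x⌋₊ * b := by rw [Nat.card_Icc, Nat.add_sub_cancel, nsmul_eq_mul]
    _ ≤ x * b := by gcongr; exact Nat.floor_le hx

section UnionBound

variable {r j n s : ℕ} {d a κ p t : ℝ}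

lemma unionBound_nonneg (hp₀ : 0 ≤ p) (hp₁ : p ≤ 1) (r j : ℕ) (κ : ℝ) (n s : ℕ) :
    0 ≤ unionBound r j κ p n s := by
  have : 0 ≤ 1 - p := sub_nonneg.2 hp₁
  unfold unionBound
  positivity

lemma unionBound_le_pow (hp₀ : 0 ≤ p) (hp₁ : p ≤ 1) (ht₀ : 0 ≤ t) (ht : exp 1 * t ≤ 1)
    (hκ : 1 ≤ κ) (hmean : (s.choose j : ℝ) * n.choose (r - j) * p ≤ t * (κ * n)) :
    unionBound r j κ p n s ≤ (2 * (exp 1 * t)) ^ n := by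
  have hK : κ * n ≤ ⌈κ * n⌉₊ := Nat.le_ceil _
  have hnK : n ≤ ⌈κ * n⌉₊ := by
    exact_mod_cast (le_mul_of_one_le_left n.cast_nonneg hκ).trans hK
  have hsets : (n.choose s : ℝ) ≤ 2 ^ n := by exact_mod_cast Nat.choose_le_two_pow n s
  have hindep : (1 - p) ^ s.choose r ≤ 1 := pow_le_one₀ (by linarith) (by linarith)
  have hedges : ((s.choose j * n.choose (r - j)).choose ⌈κ * n⌉₊ : ℝ) * p ^ ⌈κ * n⌉₊ ≤
      (exp 1 * t) ^ n :=
    calc _ ≤ (exp 1 * t) ^ ⌈κ * n⌉₊ := by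
          refine choose_mul_pow_le_exp_mul_pow hp₀ ht₀ ?_
          push_cast
          exact hmean.trans (by gcongr)
      _ ≤ (exp 1 * t) ^ n := pow_le_pow_of_le_one (by positivity) ht hnK
  calc unionBound r j κ p n s ≤ 2 ^ n * 1 * (exp 1 * t) ^ n := by
        unfold unionBound
        gcongr
    _ = (2 * (exp 1 * t)) ^ n := by rw [mul_one, ← mul_pow]

lemma tendsto_mul_sum_unionBound_zero (hr : 2 ≤ r) (hj : j ≤ r) (hd : 0 ≤ d) (ha : 0 ≤ a)
    (ht₀ : 0 ≤ t) (ht : 2 * (exp 1 * t) < 1) (hκ : 1 ≤ κ) (hdens : crossDensity r j d a ≤ t * κ) :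
    Tendsto (fun n : ℕ => (n : ℝ) * ∑ s ∈ Icc 1 ⌊a * n⌋₊, unionBound r j κ (edgeProb r d n) n s)
      atTop (nhds 0) := by
  have hlim : Tendsto (fun n : ℕ => a * ((n : ℝ) ^ 2 * (2 * (exp 1 * t)) ^ n)) atTop (nhds 0) := by
    simpa only [mul_zero] using (tendsto_pow_const_mul_const_pow_of_abs_lt_one 2
      ((abs_of_nonneg (by positivity)).trans_lt ht)).const_mul a
  have hp₀ := edgeProb_nonneg hd r
  have hp₁ : ∀ᶠ n in atTop, edgeProb r d n ≤ 1 :=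
    (tendsto_edgeProb_zero hr d).eventually_le_const one_pos
  refine squeeze_zero' ?_ ?_ hlim
  · filter_upwards [hp₁] with n hn
    exact mul_nonneg n.cast_nonneg (sum_nonneg fun s _ => unionBound_nonneg (hp₀ n) hn r j κ n s)
  · filter_upwards [hp₁, eventually_gt_atTop 0] with n hn hn₀
    have hterm (s : ℕ) (hs : (s : ℝ) ≤ a * n) :
        unionBound r j κ (edgeProb r d n) n s ≤ (2 * (exp 1 * t)) ^ n :=
      unionBound_le_pow (hp₀ n) hn ht₀ (by linarith) hκ <|
        calc _ ≤ crossDensity r j d a * n :=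
              choose_mul_choose_mul_edgeProb_le (by omega) hj hn₀ hd hs
          _ ≤ t * κ * n := by gcongr
          _ = t * (κ * n) := mul_assoc _ _ _
    calc (n : ℝ) * ∑ s ∈ Icc 1 ⌊a * n⌋₊, unionBound r j κ (edgeProb r d n) n s
        ≤ n * (a * n * (2 * (exp 1 * t)) ^ n) := by
          gcongr
          exact sum_Icc_floor_le (by positivity) (by positivity) hterm
      _ = a * ((n : ℝ) ^ 2 * (2 * (exp 1 * t)) ^ n) := by ring

end UnionBound

section Density

variable {r j : ℕ} {c d a : ℝ}

lemma relativeSize_nonneg (hr : 1 ≤ r) (hc : 0 ≤ c) (hd : 1 ≤ d) : 0 ≤ relativeSize r c d := by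
  have hr' : (0 : ℝ) ≤ r - 1 := sub_nonneg.2 (by exact_mod_cast hr)
  have hlog := log_nonneg hd
  unfold relativeSize
  positivity

lemma pow_mul_log_div_le_relativeSize_pow (hr : 2 ≤ r) (hc : 0 ≤ c) (hd : 1 ≤ d) :
    c ^ (r - 1) * (log d / d) ≤ relativeSize r c d ^ (r - 1) := by
  have hcast : ((r - 1 : ℕ) : ℝ) = (r : ℝ) - 1 := Nat.cast_pred (by omega)
  have hr' : (0 : ℝ) < r - 1 := sub_pos.2 (by exact_mod_cast hr)
  have hlog := log_nonneg hd
  have hbase : log d / d ≤ r * log d / (((r : ℝ) - 1) * d) :=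
    calc log d / d = ((r : ℝ) - 1) * log d / ((r - 1) * d) := by field_simp
      _ ≤ r * log d / ((r - 1) * d) := by gcongr; linarith
  calc c ^ (r - 1) * (log d / d) ≤ c ^ (r - 1) * (r * log d / (((r : ℝ) - 1) * d)) := by gcongr
    _ = relativeSize r c d ^ (r - 1) := by
      rw [relativeSize, mul_pow, ← hcast, one_div,
        rpow_inv_natCast_pow (by positivity) (by omega)]

lemma div_mul_pow_le_crossDensity (hj : j ≤ r) (hd : 0 ≤ d) (ha : 0 ≤ a) :
    d / r * a ^ j ≤ crossDensity r j d a := by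
  have hchoose : (1 : ℝ) ≤ r.choose j := by exact_mod_cast Nat.choose_pos hj
  unfold crossDensity
  gcongr
  exact le_mul_of_one_le_right (by positivity) hchoose

lemma tendsto_crossDensity_relativeSize_atTop (hr : 2 ≤ r) (hj : j < r) (hc : 0 < c) :
    Tendsto (fun d => crossDensity r j d (relativeSize r c d)) atTop atTop := by
  have hr₀ : (0 : ℝ) < r := by positivity
  refine tendsto_atTop.2 fun B => ?_
  have hlog : Tendsto (fun d => c ^ (r - 1) / r * log d) atTop atTop :=
    tendsto_log_atTop.const_mul_atTop (by positivity)
  have hlin : Tendsto (fun d : ℝ => d / r) atTop atTop := tendsto_id.atTop_div_const hr₀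
  filter_upwards [hlog.eventually_ge_atTop B, hlin.eventually_ge_atTop B, eventually_ge_atTop 1]
    with d hBlog hBlin hd
  have hd₀ : 0 < d := one_pos.trans_le hd
  have ha := relativeSize_nonneg (by omega : 1 ≤ r) hc.le hd
  refine le_trans ?_ (div_mul_pow_le_crossDensity hj.le hd₀.le ha)
  rcases le_total 1 (relativeSize r c d) with ha₁ | ha₁
  · exact hBlin.trans (le_mul_of_one_le_right (by positivity) (one_le_pow₀ ha₁))
  · calc B ≤ c ^ (r - 1) / r * log d := hBlog
      _ = d / r * (c ^ (r - 1) * (log d / d)) := by field_simp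
      _ ≤ d / r * relativeSize r c d ^ (r - 1) := by
        gcongr
        exact pow_mul_log_div_le_relativeSize_pow hr hc.le hd
      _ ≤ d / r * relativeSize r c d ^ j :=
        mul_le_mul_of_nonneg_left (pow_le_pow_of_le_one ha ha₁ (by omega)) (by positivity)

end Density

theorem first_moment_independent_sets_with_many_edges_general
    (r : ℕ) (hr : 2 ≤ r) (ε : ℝ) (hε : -2 < ε) :
    ∃ d₀ : ℝ, ∀ d : ℝ, d₀ ≤ d →
      ∀ j : ℕ, j < r →
        ∀ a κ : ℝ, ∀ p : ℕ → ℝ,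
          a = (1 + ε / 2) *
              ((r * Real.log d / (((r : ℝ) - 1) * d)) ^ ((1 : ℝ) / ((r : ℝ) - 1))) →
          κ = (10 * d / r) * (r.choose j : ℝ) * a ^ j →
          (∀ n : ℕ, p n = d * ((r - 1).factorial : ℝ) / (n : ℝ) ^ (r - 1)) →
          Filter.Tendsto
            (fun n : ℕ =>
              (n : ℝ) *
                ∑ s ∈ Finset.Icc 1 ⌊a * n⌋₊,
                  (n.choose s : ℝ) * (1 - p n) ^ (s.choose r) *
                    (((s.choose j * n.choose (r - j)).choose ⌈κ * n⌉₊ : ℝ) *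
                      (p n) ^ ⌈κ * n⌉₊))
            Filter.atTop (nhds 0) := by
  have hc : 0 < 1 + ε / 2 := by linarith
  have hdens : ∀ᶠ d in atTop, ∀ j ∈ range r,
      1 / 10 ≤ crossDensity r j d (relativeSize r (1 + ε / 2) d) :=
    (eventually_all_finset _).2 fun j hj =>
      (tendsto_crossDensity_relativeSize_atTop hr (mem_range.1 hj) hc).eventually_ge_atTop _
  obtain ⟨d₀, hd₀⟩ := eventually_atTop.1 (hdens.and (eventually_ge_atTop 1))
  refine ⟨d₀, fun d hd j hj a κ p ha hκ hp => ?_⟩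
  obtain ⟨hdens, hd₁⟩ := hd₀ d hd
  obtain rfl : p = edgeProb r d := funext hp
  have ha₀ : 0 ≤ a := ha ▸ relativeSize_nonneg (by omega) hc.le hd₁
  have hκ' : κ = 10 * crossDensity r j d a := by rw [hκ, crossDensity]; ring
  have hκ₁ : 1 / 10 ≤ crossDensity r j d a := ha ▸ hdens j (mem_range.2 hj)
  exact tendsto_mul_sum_unionBound_zero (t := 1 / 10) hr hj.le (by linarith) ha₀ (by norm_num)
    (by linarith [exp_one_lt_three]) (by linarith) (by linarith)

/-- For every integer `r ≥ 3` and `ε > 0` there is `d₀` such that for every real `d ≥ d₀`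
and every `1 ≤ j ≤ r−1`, with `a = (1+ε/2)(r log d/((r−1)d))^(1/(r−1))`,
`κ_j = (10d/r)C(r,j)a^j` and `p(n) = d(r−1)!/n^(r−1)`, we have
`n · Σ_{s=1}^{⌊an⌋} C(n,s)(1−p)^{C(s,r)} C(C(s,j)C(n,r−j), ⌈κ_j n⌉) p^{⌈κ_j n⌉} → 0`. -/
theorem first_moment_independent_sets_with_many_edges
    (r : ℕ) (hr : 3 ≤ r) (ε : ℝ) (hε : 0 < ε) :
    ∃ d₀ : ℝ, ∀ d : ℝ, d₀ ≤ d →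
      ∀ j : ℕ, 1 ≤ j → j ≤ r - 1 →
        ∀ a κ : ℝ, ∀ p : ℕ → ℝ,
          a = (1 + ε / 2) *
              ((r * Real.log d / (((r : ℝ) - 1) * d)) ^ ((1 : ℝ) / ((r : ℝ) - 1))) →
          κ = (10 * d / r) * (r.choose j : ℝ) * a ^ j →
          (∀ n : ℕ, p n = d * ((r - 1).factorial : ℝ) / (n : ℝ) ^ (r - 1)) →
          Filter.Tendsto
            (fun n : ℕ =>
              (n : ℝ) *
                ∑ s ∈ Finset.Icc 1 ⌊a * n⌋₊,
                  (n.choose s : ℝ) * (1 - p n) ^ (s.choose r) *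
                    (((s.choose j * n.choose (r - j)).choose ⌈κ * n⌉₊ : ℝ) *
                      (p n) ^ ⌈κ * n⌉₊))
            Filter.atTop (nhds 0) := by
  obtain ⟨d₀, h⟩ :=
    first_moment_independent_sets_with_many_edges_general r (by omega) ε (by linarith)
  exact ⟨d₀, fun d hd j _ hj => h d hd j (by omega)⟩
end
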